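/- arXiv:0803.1339 — 3 statements merged into one kernel-verified Lean document; each statement's English description precedes it below -/
import Mathlib

section
/- For every u ∈ ℂ, Pf(Φ̃(u)) = Σ_{k=0}^{⌊n/2⌋} (−i/2)^{n−2k} H_{n−2k}(i u) · Γ_k in End(P), where i = √−1 and H_m denotes the (physicists') Hermite polynomial of degree m, given explicitly by H_m(x) = m! Σ_{j=0}^{⌊m/2⌋} ( (−1)^j 2^{m−2j} / (j! (m−2j)!) ) x^{m−2j}. -/
open Matrix MvPolynomial

noncomputable section

/-- Index set for entries `x_{i,j}` with `i < j`. -/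
abbrev Idx (n : ℕ) := {p : Fin n × Fin n // p.1 < p.2}

/-- Polynomial algebra on the space of alternating `n × n` matrices. -/
abbrev P (n : ℕ) := MvPolynomial (Idx n) ℂ

/-- Multiplication operator `M_{i,j}` (with `M_{j,i} = -M_{i,j}`, `M_{i,i} = 0`). -/
def Mop (n : ℕ) (i j : Fin n) : Module.End ℂ (P n) :=
  if h : i < j then LinearMap.mulLeft ℂ (X ⟨(i, j), h⟩)
  else if h' : j < i then -LinearMap.mulLeft ℂ (X ⟨(j, i), h'⟩ : P n)
  else 0

/-- Derivation `D_{i,j} = ∂/∂x_{i,j}` (with `D_{j,i} = -D_{i,j}`, `D_{i,i} = 0`). -/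
def Dop (n : ℕ) (i j : Fin n) : Module.End ℂ (P n) :=
  if h : i < j then ((pderiv ⟨(i, j), h⟩ : Derivation ℂ (P n) (P n)) : P n →ₗ[ℂ] P n)
  else if h' : j < i then -((pderiv ⟨(j, i), h'⟩ : Derivation ℂ (P n) (P n)) : P n →ₗ[ℂ] P n)
  else 0

/-- The generic alternating matrix with entries in `P n`. -/
def genMat (n : ℕ) : Matrix (Fin n) (Fin n) (P n) := Matrix.of fun i j =>
  if h : i < j then X ⟨(i, j), h⟩
  else if h' : j < i then -X ⟨(j, i), h'⟩
  else 0

/-- The representation `π(g)` of `GL n ℂ` on `P n`, sending `x_{i,j}` to the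
`(i,j)`-entry of `g⁻¹ x ᵗ(g⁻¹)`. -/
def piHom (n : ℕ) (g : GL (Fin n) ℂ) : P n →ₐ[ℂ] P n :=
  aeval fun v : Idx n =>
    ((((g⁻¹ : GL (Fin n) ℂ) : Matrix (Fin n) (Fin n) ℂ).map (algebraMap ℂ (P n)) * genMat n *
      (((g⁻¹ : GL (Fin n) ℂ) : Matrix (Fin n) (Fin n) ℂ).map (algebraMap ℂ (P n)))ᵀ))
      v.1.1 v.1.2

/-- Pfaffian of a `2m × 2m` matrix with (possibly noncommuting) entries in a `ℂ`-algebra. -/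
def Pf {A : Type*} [Ring A] [Algebra ℂ A] {m : ℕ} (B : Matrix (Fin (2 * m)) (Fin (2 * m)) A) :
    A :=
  (((2 : ℂ) ^ m * m.factorial)⁻¹) • ∑ σ : Equiv.Perm (Fin (2 * m)),
    (Equiv.Perm.sign σ : ℤ) •
      (List.ofFn (fun i : Fin m =>
        B (σ ⟨2 * (i : ℕ), by have := i.isLt; omega⟩)
          (σ ⟨2 * (i : ℕ) + 1, by have := i.isLt; omega⟩))).prod

/-- The matrix `J_n` with 1's on the anti-diagonal. -/
def Jmat (A : Type*) [Zero A] [One A] (n : ℕ) : Matrix (Fin n) (Fin n) A :=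
  Matrix.of fun i j => if (i : ℕ) + (j : ℕ) = n - 1 then 1 else 0

/-- Reindexing `Fin n ⊕ Fin n ≃ Fin (2*n)`. -/
def sumEquiv (n : ℕ) : (Fin n ⊕ Fin n) ≃ Fin (2 * n) :=
  finSumFinEquiv.trans (finCongr (two_mul n).symm)

/-- The alternating matrix `Φ̃(u) = [[M, u·J_n], [−u·J_n, −J_n D J_n]]` over `End(P)`. -/
def PhiTilde (n : ℕ) (u : ℂ) : Matrix (Fin (2 * n)) (Fin (2 * n)) (Module.End ℂ (P n)) :=
  Matrix.reindex (sumEquiv n) (sumEquiv n)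
    (Matrix.fromBlocks (Matrix.of fun i j => Mop n i j) (u • Jmat (Module.End ℂ (P n)) n)
      (-(u • Jmat (Module.End ℂ (P n)) n))
      (-(Jmat (Module.End ℂ (P n)) n * (Matrix.of fun i j => Dop n i j) *
          Jmat (Module.End ℂ (P n)) n)))


/-- `Γ_k = Σ_{|I|=2k} Pf(x_I) Pf(∂_I)`. -/
def Gamma (n k : ℕ) : Module.End ℂ (P n) :=
  ∑ I : {I : Finset (Fin n) // I.card = 2 * k},
    Pf (Matrix.of fun a b : Fin (2 * k) =>
        Mop n (I.1.orderIsoOfFin I.2 a) (I.1.orderIsoOfFin I.2 b)) *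
      Pf (Matrix.of fun a b : Fin (2 * k) =>
        Dop n (I.1.orderIsoOfFin I.2 a) (I.1.orderIsoOfFin I.2 b))

/-- The physicists' Hermite polynomial
`H_m(x) = m! Σ_{j=0}^{⌊m/2⌋} ((−1)^j 2^{m−2j} / (j! (m−2j)!)) x^{m−2j}`. -/
def Hermite (m : ℕ) (x : ℂ) : ℂ :=
  (m.factorial : ℂ) *
    ∑ j ∈ Finset.range (m / 2 + 1),
      (((-1 : ℂ)) ^ j * (2 : ℂ) ^ (m - 2 * j) /
          ((j.factorial : ℂ) * ((m - 2 * j).factorial : ℂ))) *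
        x ^ (m - 2 * j)



/-! ### Products over consecutive pairs -/

def pprod {X R : Type*} [Monoid R] {m : ℕ} (B : X → X → R) (v : Fin (2 * m) → X) : R :=
  (List.ofFn (fun i : Fin m =>
        B (v ⟨2 * (i : ℕ), by have := i.isLt; omega⟩)
          (v ⟨2 * (i : ℕ) + 1, by have := i.isLt; omega⟩))).prod

theorem pprod_zero {X R : Type*} [Monoid R] (B : X → X → R) (v : Fin (2 * 0) → X) :
    pprod B v = 1 := by
  simp [pprod]

def tail2 {X : Type*} {m : ℕ} (v : Fin (2 * (m + 1)) → X) : Fin (2 * m) → X :=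
  fun i => v ⟨(i : ℕ) + 2, by have := i.isLt; omega⟩

def cons2 {X : Type*} {m : ℕ} (x y : X) (v : Fin (2 * m) → X) : Fin (2 * (m + 1)) → X :=
  Fin.cons (n := 2 * m + 1) (α := fun _ => X) x (Fin.cons (n := 2 * m) (α := fun _ => X) y v)

theorem pprod_succ {X R : Type*} [Monoid R] {m : ℕ} (B : X → X → R)
    (v : Fin (2 * (m + 1)) → X) :
    pprod B v = B (v ⟨0, by omega⟩) (v ⟨1, by omega⟩) * pprod B (tail2 v) := by
  unfold pprod tail2
  rw [List.ofFn_succ, List.prod_cons]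
  rfl

theorem pprod_cons2 {X R : Type*} [Monoid R] {m : ℕ} (B : X → X → R) (x y : X)
    (v : Fin (2 * m) → X) :
    pprod B (cons2 x y v) = B x y * pprod B v := by
  rw [pprod_succ]
  rfl

theorem sum_cons2 {X R : Type*} [Fintype X] [AddCommMonoid R] {m : ℕ}
    (F : (Fin (2 * (m + 1)) → X) → R) :
    ∑ v, F v = ∑ x, ∑ y, ∑ v, F (cons2 x y v) := by
  have h1 : ∀ (N : ℕ) (G : (Fin (N + 1) → X) → R),
      ∑ v, G v = ∑ x, ∑ v : Fin N → X, G (Fin.cons (α := fun _ => X) x v) := by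
    intro N G
    rw [← Fintype.sum_prod_type']
    exact (Fintype.sum_equiv (Fin.consEquiv (fun _ => X)) _ _ (fun _ => rfl)).symm
  rw [show (∑ v, F v) = ∑ v : Fin (2 * m + 1 + 1) → X, F v from rfl, h1]
  refine Finset.sum_congr rfl fun x _ => ?_
  rw [h1]
  rfl

theorem sum_pow_pairs {X R : Type*} [Fintype X] [Semiring R] (B : X → X → R) (m : ℕ) :
    (∑ i, ∑ j, B i j) ^ m = ∑ v : Fin (2 * m) → X, pprod B v := by
  induction m with
  | zero => simp [pprod]
  | succ m ih =>
    rw [sum_cons2, pow_succ', ih]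
    simp only [pprod_cons2, ← Finset.mul_sum, ← Finset.sum_mul]

theorem pprod_word {X R : Type*} [Monoid R] {m : ℕ} (g : X → R) (v : Fin (2 * m) → X) :
    pprod (fun i j => g i * g j) v = (List.ofFn fun a => g (v a)).prod := by
  induction m with
  | zero => simp [pprod]
  | succ m ih =>
    rw [pprod_succ, ih, show (List.ofFn fun a => g (v a)) =
      List.ofFn (n := 2 * m + 1 + 1) fun a => g (v a) from rfl, List.ofFn_succ, List.ofFn_succ,
      List.prod_cons, List.prod_cons, mul_assoc]
    rfl

theorem pprod_mul {X R : Type*} [Monoid R] {m : ℕ} (B C : X → X → R)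
    (h : ∀ i j k l, Commute (C i j) (B k l)) (v : Fin (2 * m) → X) :
    pprod B v * pprod C v = pprod (fun i j => B i j * C i j) v := by
  induction m with
  | zero => simp [pprod]
  | succ m ih =>
    have hc : ∀ i j, ∀ w : Fin (2 * m) → X, Commute (C i j) (pprod B w) := by
      intro i j w
      unfold pprod
      apply Commute.list_prod_right
      intro x hx
      rw [List.mem_ofFn] at hx
      obtain ⟨a, rfl⟩ := hx
      exact h _ _ _ _
    rw [pprod_succ, pprod_succ, pprod_succ, ← ih]
    simp only [mul_assoc]
    congr 1
    simp only [← mul_assoc]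
    rw [(hc _ _ _).eq]

theorem pprod_smul {X R : Type*} [Ring R] [Algebra ℂ R] {m : ℕ} (c : ℂ) (B : X → X → R)
    (v : Fin (2 * m) → X) :
    pprod (fun i j => c • B i j) v = c ^ m • pprod B v := by
  induction m with
  | zero => simp [pprod]
  | succ m ih =>
    rw [pprod_succ, pprod_succ, ih, smul_mul_smul_comm, pow_succ']

open scoped TensorProduct in
theorem pprod_tmul {X R S : Type*} [Ring R] [Algebra ℂ R] [Ring S] [Algebra ℂ S] {m : ℕ}
    (B : X → X → R) (C : X → X → S) (v : Fin (2 * m) → X) :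
    pprod (fun i j => (B i j ⊗ₜ[ℂ] C i j : R ⊗[ℂ] S)) v = pprod B v ⊗ₜ[ℂ] pprod C v := by
  induction m with
  | zero => simp [pprod, Algebra.TensorProduct.one_def]
  | succ m ih =>
    rw [pprod_succ, pprod_succ, pprod_succ, ih, Algebra.TensorProduct.tmul_mul_tmul]

/-! ### Sums over functions vanishing on non-injective ones -/

theorem sum_inj_perm {R : Type*} [AddCommMonoid R] {N : ℕ} (F : (Fin N → Fin N) → R)
    (hF : ∀ v, ¬ Function.Injective v → F v = 0) :
    ∑ v, F v = ∑ σ : Equiv.Perm (Fin N), F σ := by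
  symm
  apply Finset.sum_of_injOn (fun σ : Equiv.Perm (Fin N) => (σ : Fin N → Fin N))
  · intro a _ b _ h
    exact DFunLike.coe_injective h
  · intro a _; simp
  · intro v _ hv
    apply hF
    intro hi
    apply hv
    exact ⟨Equiv.ofBijective v (Finite.injective_iff_bijective.mp hi), by simp, rfl⟩
  · intro _ _; rfl

theorem sum_inj_subset {R : Type*} [AddCommMonoid R] {N r : ℕ} (F : (Fin r → Fin N) → R)
    (hF : ∀ v, ¬ Function.Injective v → F v = 0) :
    ∑ v, F v = ∑ I : {I : Finset (Fin N) // I.card = r}, ∑ σ : Equiv.Perm (Fin r),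
      F (fun a => (I.1.orderIsoOfFin I.2 (σ a) : Fin N)) := by
  rw [← Fintype.sum_prod_type']
  symm
  apply Finset.sum_of_injOn
    (fun p : {I : Finset (Fin N) // I.card = r} × Equiv.Perm (Fin r) =>
      fun a => ((p.1.1.orderIsoOfFin p.1.2 (p.2 a) : p.1.1) : Fin N))
  · rintro ⟨⟨I, hI⟩, σ⟩ _ ⟨⟨J, hJ⟩, ρ⟩ _ h
    simp only at h
    have key : ∀ (I : Finset (Fin N)) (hI : I.card = r) (σ : Equiv.Perm (Fin r)),
        Set.range (fun a => ((I.orderIsoOfFin hI (σ a) : I) : Fin N)) = I := by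
      intro I hI σ
      ext x
      constructor
      · rintro ⟨a, rfl⟩
        exact (I.orderIsoOfFin hI (σ a)).2
      · intro hx
        exact ⟨σ.symm ((I.orderIsoOfFin hI).symm ⟨x, hx⟩), by simp⟩
    have hIJ : I = J := by
      have := key I hI σ
      rw [h, key J hJ ρ] at this
      exact (Finset.coe_injective this).symm
    subst hIJ
    congr 1
    ext a
    have := congrFun h a
    have := Subtype.ext this
    rw [(I.orderIsoOfFin hI).injective this]
  · intro _ _; simp
  · intro v _ hv
    apply hF
    intro hi
    apply hv
    have hc : (Finset.univ.image v).card = r := by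
      rw [Finset.card_image_of_injective _ hi]; simp
    let f : Fin r → Fin r := fun a =>
      ((Finset.univ.image v).orderIsoOfFin hc).symm ⟨v a, by simp⟩
    have hf : Function.Injective f := by
      intro a b h
      have := ((Finset.univ.image v).orderIsoOfFin hc).symm.injective h
      exact hi (Subtype.mk.inj this)
    exact ⟨(⟨Finset.univ.image v, hc⟩,
      Equiv.ofBijective f (Finite.injective_iff_bijective.mp hf)), by simp, by
        ext a; simp [f]⟩
  · intro _ _; rfl

/-! ### Normal ordering -/

def dp {R : Type*} [Ring R] [Algebra ℂ R] (x : R) (k : ℕ) : R := ((k.factorial : ℂ)⁻¹) • x ^ k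

theorem mul_dp {R : Type*} [Ring R] [Algebra ℂ R] (x : R) (k : ℕ) :
    x * dp x k = ((k : ℂ) + 1) • dp x (k + 1) := by
  unfold dp
  rw [mul_smul_comm, ← pow_succ', smul_smul, Nat.factorial_succ]
  congr 1
  have : (k.factorial : ℂ) ≠ 0 := by exact_mod_cast k.factorial_ne_zero
  have : (k + 1 : ℂ) ≠ 0 := by exact_mod_cast k.succ_ne_zero
  push_cast
  field_simp

theorem Commute.dp_right' {R : Type*} [Ring R] [Algebra ℂ R] {x y : R} (h : Commute x y) (k : ℕ) :
    Commute x (dp y k) := (h.pow_right k).smul_right _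

theorem comm_dp {R : Type*} [Ring R] [Algebra ℂ R] (a b w : R)
    (hab : b * a = a * b + (2 : ℂ) • w) (ha : Commute w a) (p : ℕ) :
    b * dp a (p + 1) = dp a (p + 1) * b + (2 : ℂ) • (dp a p * w) := by
  induction p with
  | zero => simp [dp, hab]
  | succ p ih =>
    have h2 : ((p + 1 : ℕ) : ℂ) + 1 ≠ 0 := by exact_mod_cast (p + 1).succ_ne_zero
    have h := mul_dp a (p + 1)
    have h' : dp a (p + 1 + 1) = (((p + 1 : ℕ) : ℂ) + 1)⁻¹ • (a * dp a (p + 1)) := by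
      rw [h, smul_smul, inv_mul_cancel₀ h2, one_smul]
    rw [h', mul_smul_comm, ← mul_assoc, hab, add_mul, mul_assoc a b, ih, mul_add, smul_mul_assoc,
      smul_mul_assoc, mul_smul_comm, ← mul_assoc a (dp a p), mul_dp, (ha.dp_right' _).eq,
      ← mul_assoc a]
    rw [smul_add, smul_add, add_assoc, smul_mul_assoc, smul_smul, smul_smul, smul_smul, ← add_smul]
    congr 2
    push_cast at *
    field_simp

def trip (m : ℕ) : Finset (ℕ × ℕ × ℕ) :=
  (Finset.range (m + 1) ×ˢ Finset.range (m + 1) ×ˢ Finset.range (m + 1)).filter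
    fun x => x.1 + x.2.1 + 2 * x.2.2 = m

theorem mem_trip (m : ℕ) (x : ℕ × ℕ × ℕ) : x ∈ trip m ↔ x.1 + x.2.1 + 2 * x.2.2 = m := by
  simp [trip]; omega

theorem weyl {R : Type*} [Ring R] [Algebra ℂ R] (a b w : R)
    (hab : b * a = a * b + (2 : ℂ) • w) (ha : Commute w a) (hb : Commute w b) (m : ℕ) :
    dp (a + b) m = ∑ x ∈ trip m, dp a x.1 * dp b x.2.1 * dp w x.2.2 := by
  induction m with
  | zero =>
    rw [show trip 0 = {(0, 0, 0)} by rfl]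
    simp [dp]
  | succ m ih =>
    have h2 : (m : ℂ) + 1 ≠ 0 := by exact_mod_cast m.succ_ne_zero
    suffices h : ((m : ℂ) + 1) • dp (a + b) (m + 1) = ((m : ℂ) + 1) •
        ∑ x ∈ trip (m + 1), dp a x.1 * dp b x.2.1 * dp w x.2.2 from smul_right_injective _ h2 h
    rw [← mul_dp, ih, add_mul]
    set g : ℕ → ℕ → ℕ → R := fun p q j => dp a p * dp b q * dp w j with hg
    have e1 : a * ∑ x ∈ trip m, dp a x.1 * dp b x.2.1 * dp w x.2.2 =
        ∑ x ∈ trip (m + 1), (x.1 : ℂ) • g x.1 x.2.1 x.2.2 := by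
      rw [Finset.mul_sum]
      apply Finset.sum_of_injOn (fun x => (x.1 + 1, x.2.1, x.2.2))
      · rintro ⟨p, q, j⟩ _ ⟨p', q', j'⟩ _ h; simpa using h
      · rintro ⟨p, q, j⟩ h
        simp only [Finset.mem_coe, mem_trip] at h ⊢; omega
      · rintro ⟨p, q, j⟩ h hn
        rcases p with _ | p
        · simp
        · exfalso; apply hn
          refine ⟨(p, q, j), ?_, rfl⟩
          simp only [Finset.mem_coe, mem_trip] at h ⊢; omega
      · rintro ⟨p, q, j⟩ _
        simp only [hg, ← mul_assoc, mul_dp, smul_mul_assoc]; push_cast; rfl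
    have hbj : ∀ q j, dp b q * (w * dp w j) = ((j : ℂ) + 1) • (dp b q * dp w (j + 1)) := by
      intro q j
      rw [mul_dp, mul_smul_comm]
    have e2 : b * ∑ x ∈ trip m, dp a x.1 * dp b x.2.1 * dp w x.2.2 =
        ∑ x ∈ trip m, ((x.2.1 : ℂ) + 1) • g x.1 (x.2.1 + 1) x.2.2 +
        ∑ x ∈ trip m, (if x.1 = 0 then 0 else
          (2 * ((x.2.2 : ℂ) + 1)) • g (x.1 - 1) x.2.1 (x.2.2 + 1)) := by
      rw [Finset.mul_sum, ← Finset.sum_add_distrib]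
      refine Finset.sum_congr rfl ?_
      rintro ⟨p, q, j⟩ _
      rcases p with _ | p
      · have : dp a 0 = 1 := by simp [dp]
        simp only [hg, this, one_mul, ← mul_assoc, mul_dp, smul_mul_assoc, if_true, add_zero]
      · simp only [hg]
        rw [← mul_assoc, ← mul_assoc, comm_dp a b w hab ha, add_mul, add_mul, mul_assoc (dp a (p + 1)) b,
          mul_dp]
        simp only [smul_mul_assoc, mul_smul_comm, Nat.add_sub_cancel, Nat.succ_ne_zero, if_false]
        congr 1
        rw [mul_assoc (dp a p) w, (hb.dp_right' q).eq, mul_assoc (dp a p), mul_assoc (dp b q), hbj,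
          mul_smul_comm, smul_smul, mul_assoc (dp a p)]
    have e3 : ∑ x ∈ trip m, ((x.2.1 : ℂ) + 1) • g x.1 (x.2.1 + 1) x.2.2 =
        ∑ x ∈ trip (m + 1), (x.2.1 : ℂ) • g x.1 x.2.1 x.2.2 := by
      apply Finset.sum_of_injOn (fun x => (x.1, x.2.1 + 1, x.2.2))
      · rintro ⟨p, q, j⟩ _ ⟨p', q', j'⟩ _ h; simpa using h
      · rintro ⟨p, q, j⟩ h
        simp only [Finset.mem_coe, mem_trip] at h ⊢; omega
      · rintro ⟨p, q, j⟩ h hn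
        rcases q with _ | q
        · simp
        · exfalso; apply hn
          refine ⟨(p, q, j), ?_, rfl⟩
          simp only [Finset.mem_coe, mem_trip] at h ⊢; omega
      · rintro ⟨p, q, j⟩ _
        push_cast; rfl
    have e4 : ∑ x ∈ trip m, (if x.1 = 0 then 0 else
          (2 * ((x.2.2 : ℂ) + 1)) • g (x.1 - 1) x.2.1 (x.2.2 + 1)) =
        ∑ x ∈ trip (m + 1), (2 * (x.2.2 : ℂ)) • g x.1 x.2.1 x.2.2 := by
      have : ∀ x : ℕ × ℕ × ℕ, (if x.1 = 0 then 0 else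
          (2 * ((x.2.2 : ℂ) + 1)) • g (x.1 - 1) x.2.1 (x.2.2 + 1)) = (if x.1 ≠ 0 then
          (2 * ((x.2.2 : ℂ) + 1)) • g (x.1 - 1) x.2.1 (x.2.2 + 1) else 0) := by
        intro x; simp
      simp only [this]
      rw [← Finset.sum_filter]
      apply Finset.sum_of_injOn (fun x => (x.1 - 1, x.2.1, x.2.2 + 1))
      · rintro ⟨p, q, j⟩ h ⟨p', q', j'⟩ h' he
        simp only [Finset.coe_filter, Set.mem_ofPred_eq, Prod.mk.injEq] at h h' he ⊢
        omega
      · rintro ⟨p, q, j⟩ h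
        simp only [Finset.coe_filter, Set.mem_ofPred_eq, Finset.mem_coe, mem_trip] at h ⊢; omega
      · rintro ⟨p, q, j⟩ h hn
        rcases j with _ | j
        · simp
        · exfalso; apply hn
          refine ⟨(p + 1, q, j), ?_, rfl⟩
          simp only [Finset.coe_filter, Set.mem_ofPred_eq, mem_trip] at h ⊢; omega
      · rintro ⟨p, q, j⟩ _
        push_cast; rfl
    rw [e1, e2, e3, e4, ← Finset.sum_add_distrib, ← Finset.sum_add_distrib, Finset.smul_sum]
    refine Finset.sum_congr rfl ?_
    rintro ⟨p, q, j⟩ h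
    rw [mem_trip] at h
    simp only at h ⊢
    rw [← add_smul, ← add_smul]
    congr 1
    rw [← add_assoc]
    exact_mod_cast h

/-! ### The exterior algebra and its top coefficient -/

abbrev Lam (n : ℕ) := ExteriorAlgebra ℂ (Fin (2 * n) → ℂ)

def gen (n : ℕ) (i : Fin (2 * n)) : Lam n := ExteriorAlgebra.ι ℂ (Pi.single i 1)

def topAlt (n : ℕ) (i : ℕ) : (Fin (2 * n) → ℂ) [⋀^Fin i]→ₗ[ℂ] ℂ :=
  if h : i = 2 * n then
    (Matrix.detRowAlternating (R := ℂ) (n := Fin (2 * n))).domDomCongr (finCongr h.symm)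
  else 0

def lam (n : ℕ) : Lam n →ₗ[ℂ] ℂ := ExteriorAlgebra.liftAlternating (topAlt n)

theorem lam_top (n : ℕ) (v : Fin (2 * n) → Fin (2 * n) → ℂ) :
    lam n (ExteriorAlgebra.ιMulti ℂ (2 * n) v) = Matrix.det (Matrix.of v) := by
  simp [lam, topAlt]
  rfl

theorem word_eq {n r : ℕ} (v : Fin r → Fin (2 * n)) :
    (List.ofFn fun a => gen n (v a)).prod =
      ExteriorAlgebra.ιMulti ℂ r (fun a => (Pi.single (v a) 1 : Fin (2 * n) → ℂ)) := by
  rw [ExteriorAlgebra.ιMulti_apply]; rfl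

theorem word_not_inj {n r : ℕ} (v : Fin r → Fin (2 * n)) (hv : ¬ Function.Injective v) :
    (List.ofFn fun a => gen n (v a)).prod = 0 := by
  rw [word_eq]
  apply ExteriorAlgebra.ιMulti_eq_zero_of_not_inj
  intro h
  apply hv
  intro a b hab
  apply h
  simp [hab]

theorem word_perm {n r : ℕ} (v : Fin r → Fin (2 * n)) (σ : Equiv.Perm (Fin r)) :
    (List.ofFn fun a => gen n (v (σ a))).prod =
      (Equiv.Perm.sign σ : ℤ) • (List.ofFn fun a => gen n (v a)).prod := by
  rw [word_eq, word_eq]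
  exact (ExteriorAlgebra.ιMulti ℂ r).map_perm (fun a => (Pi.single (v a) 1 : Fin (2 * n) → ℂ)) σ

theorem lam_id (n : ℕ) : lam n (List.ofFn fun a => gen n a).prod = 1 := by
  rw [word_eq (fun a => a), lam_top, ← Matrix.det_one (n := Fin (2 * n)) (R := ℂ)]
  congr 1
  ext i j
  simp [Matrix.one_apply, Pi.single_apply, eq_comm]

theorem gen_anti (n : ℕ) (i j : Fin (2 * n)) : gen n i * gen n j = -(gen n j * gen n i) :=
  eq_neg_of_add_eq_zero_left (ExteriorAlgebra.ι_add_mul_swap _ _)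

theorem gen_sq (n : ℕ) (i : Fin (2 * n)) : gen n i * gen n i = 0 :=
  ExteriorAlgebra.ι_sq_zero _

theorem gen_pair_comm (n : ℕ) (i j k : Fin (2 * n)) : Commute (gen n i * gen n j) (gen n k) := by
  unfold Commute SemiconjBy
  rw [mul_assoc, gen_anti n j k, mul_neg, ← mul_assoc, gen_anti n i k, neg_mul, neg_neg, mul_assoc]

/-! ### The generators `e_i`, `f_i` -/

def ei (n : ℕ) (i : Fin n) : Fin (2 * n) := sumEquiv n (Sum.inl i)
def fi (n : ℕ) (i : Fin n) : Fin (2 * n) := sumEquiv n (Sum.inr (Fin.rev i))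

theorem ei_inj (n : ℕ) : Function.Injective (ei n) := fun _ _ h =>
  Sum.inl_injective ((sumEquiv n).injective h)
theorem fi_inj (n : ℕ) : Function.Injective (fi n) := fun _ _ h =>
  Fin.rev_injective (Sum.inr_injective ((sumEquiv n).injective h))

def ee (n : ℕ) (i : Fin n) : Lam n := gen n (ei n i)
def ff (n : ℕ) (i : Fin n) : Lam n := gen n (fi n i)
def yy (n : ℕ) (i : Fin n) : Lam n := ee n i * ff n i
def tau (n : ℕ) : Lam n := ∑ i, yy n i

/-- torus weights -/
def wt (n : ℕ) (d : Fin n → ℂ) (c : Fin (2 * n)) : ℂ :=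
  Sum.elim d (fun i => (d (Fin.rev i))⁻¹) ((sumEquiv n).symm c)

theorem wt_ei (n : ℕ) (d : Fin n → ℂ) (i : Fin n) : wt n d (ei n i) = d i := by simp [wt, ei]
theorem wt_fi (n : ℕ) (d : Fin n → ℂ) (i : Fin n) : wt n d (fi n i) = (d i)⁻¹ := by simp [wt, fi]

theorem prod_wt (n : ℕ) (d : Fin n → ℂ) (hd : ∀ i, d i ≠ 0) : ∏ c, wt n d c = 1 := by
  rw [← (sumEquiv n).prod_comp, Fintype.prod_sum_type]
  have : ∏ i, wt n d (sumEquiv n (Sum.inr i)) = ∏ i, wt n d (fi n i) :=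
    (Equiv.prod_comp Fin.revPerm (fun i => wt n d (sumEquiv n (Sum.inr i)))).symm
  rw [this]
  have h1 : ∀ i, wt n d (sumEquiv n (Sum.inl i)) = d i := wt_ei n d
  simp only [h1, wt_fi]
  rw [← Finset.prod_mul_distrib]
  exact Finset.prod_eq_one fun i _ => mul_inv_cancel₀ (hd i)

def torus (n : ℕ) (d : Fin n → ℂ) : (Fin (2 * n) → ℂ) →ₗ[ℂ] (Fin (2 * n) → ℂ) where
  toFun x c := wt n d c * x c
  map_add' x y := by ext c; simp [mul_add]
  map_smul' r x := by ext c; simp; ring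

theorem torus_single (n : ℕ) (d : Fin n → ℂ) (c : Fin (2 * n)) :
    torus n d (Pi.single c 1) = wt n d c • Pi.single c 1 := by
  ext c'
  by_cases h : c' = c
  · subst h; simp [torus]
  · simp [torus, h]

theorem lam_torus (n : ℕ) (d : Fin n → ℂ) (hd : ∀ i, d i ≠ 0) (x : Lam n) :
    lam n (ExteriorAlgebra.map (torus n d) x) = lam n x := by
  suffices h : lam n ∘ₗ (ExteriorAlgebra.map (torus n d)).toLinearMap = lam n from
    LinearMap.congr_fun h x
  apply ExteriorAlgebra.lhom_ext
  intro i
  ext v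
  simp only [LinearMap.compAlternatingMap_apply, LinearMap.comp_apply, AlgHom.toLinearMap_apply,
    ExteriorAlgebra.map_apply_ιMulti]
  by_cases h : i = 2 * n
  · subst h
    rw [lam_top, lam_top]
    have := Matrix.det_mul_row (wt n d) (Matrix.of v)
    rw [prod_wt n d hd, one_mul] at this
    exact this
  · simp [lam, topAlt, h]

theorem map_gen (n : ℕ) (d : Fin n → ℂ) (c : Fin (2 * n)) :
    ExteriorAlgebra.map (torus n d) (gen n c) = wt n d c • gen n c := by
  rw [gen, ExteriorAlgebra.map_apply_ι, torus_single, map_smul]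

theorem map_tau (n : ℕ) (d : Fin n → ℂ) (hd : ∀ i, d i ≠ 0) :
    ExteriorAlgebra.map (torus n d) (tau n) = tau n := by
  simp only [tau, yy, ee, ff, map_sum, map_mul, map_gen, wt_ei, wt_fi, smul_mul_smul_comm]
  refine Finset.sum_congr rfl fun i _ => ?_
  rw [mul_inv_cancel₀ (hd i), one_smul]

theorem map_word (n r : ℕ) (d : Fin n → ℂ) (v : Fin r → Fin (2 * n)) :
    ExteriorAlgebra.map (torus n d) (List.ofFn fun a => gen n (v a)).prod =
      (∏ a, wt n d (v a)) • (List.ofFn fun a => gen n (v a)).prod := by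
  rw [word_eq, ExteriorAlgebra.map_apply_ιMulti, ← AlternatingMap.map_smul_univ]
  congr 1
  ext a : 1
  exact torus_single n d (v a)

/-- The structure constants. -/
def cc (n m : ℕ) {r s : ℕ} (v : Fin r → Fin n) (v' : Fin s → Fin n) : ℂ :=
  lam n ((List.ofFn fun a => ee n (v a)).prod * (List.ofFn fun a => ff n (v' a)).prod * tau n ^ m)

theorem cc_torus (n m : ℕ) {r s : ℕ} (v : Fin r → Fin n) (v' : Fin s → Fin n)
    (h : cc n m v v' ≠ 0) (d : Fin n → ℂ) (hd : ∀ i, d i ≠ 0) :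
    ∏ a, d (v a) = ∏ a, d (v' a) := by
  have h1 := lam_torus n d hd
    ((List.ofFn fun a => ee n (v a)).prod * (List.ofFn fun a => ff n (v' a)).prod * tau n ^ m)
  rw [map_mul (ExteriorAlgebra.map (torus n d)), map_mul (ExteriorAlgebra.map (torus n d)), map_pow,
    map_tau n d hd] at h1
  unfold ee ff at h1
  rw [map_word n r d (fun a => ei n (v a)), map_word n s d (fun a => fi n (v' a)),
    smul_mul_smul_comm, smul_mul_assoc, map_smul, smul_eq_mul] at h1
  have h2 : (∏ a, wt n d (ei n (v a))) * ∏ a, wt n d (fi n (v' a)) = 1 := by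
    apply mul_right_cancel₀ h
    rw [one_mul]; exact h1
  simp only [wt_ei, wt_fi] at h2
  rw [Finset.prod_inv_distrib] at h2
  have h3 : ∏ a, d (v' a) ≠ 0 := Finset.prod_ne_zero_iff.mpr fun a _ => hd _
  field_simp at h2
  exact h2

theorem cc_card (n m : ℕ) {r s : ℕ} (v : Fin r → Fin n) (v' : Fin s → Fin n) (hrs : r ≠ s) :
    cc n m v v' = 0 := by
  by_contra h
  have := cc_torus n m v v' h (fun _ => 2) (fun _ => two_ne_zero)
  simp only [Finset.prod_const, Finset.card_univ, Fintype.card_fin] at this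
  apply hrs
  have h2 : (2 : ℕ) ^ r = 2 ^ s := by exact_mod_cast this
  exact Nat.pow_right_injective (le_refl 2) h2

theorem cc_range (n m : ℕ) {r s : ℕ} (v : Fin r → Fin n) (v' : Fin s → Fin n)
    (hv : Function.Injective v) (a : Fin r) (ha : ∀ b, v' b ≠ v a) :
    cc n m v v' = 0 := by
  by_contra h
  have := cc_torus n m v v' h (fun i => if i = v a then 2 else 1)
    (fun i => by split_ifs <;> norm_num)
  simp only [ha, if_false, Finset.prod_const_one, hv.eq_iff, Finset.prod_ite_eq',
    Finset.mem_univ, if_true] at this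
  norm_num at this

theorem cc_not_inj_left (n m : ℕ) {r s : ℕ} (v : Fin r → Fin n) (v' : Fin s → Fin n)
    (hv : ¬ Function.Injective v) : cc n m v v' = 0 := by
  unfold cc ee
  rw [word_not_inj (fun a => ei n (v a)) (fun h => hv (Function.Injective.of_comp (f := ei n) h))]
  simp

theorem cc_not_inj_right (n m : ℕ) {r s : ℕ} (v : Fin r → Fin n) (v' : Fin s → Fin n)
    (hv : ¬ Function.Injective v') : cc n m v v' = 0 := by
  unfold cc ff
  rw [word_not_inj (fun a => fi n (v' a)) (fun h => hv (Function.Injective.of_comp (f := fi n) h))]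
  simp

theorem cc_perm (n m : ℕ) {r s : ℕ} (v : Fin r → Fin n) (v' : Fin s → Fin n)
    (σ : Equiv.Perm (Fin r)) (ρ : Equiv.Perm (Fin s)) :
    cc n m (fun a => v (σ a)) (fun a => v' (ρ a)) =
      (Equiv.Perm.sign σ : ℤ) • (Equiv.Perm.sign ρ : ℤ) • cc n m v v' := by
  unfold cc ee ff
  rw [word_perm (fun a => ei n (v a)) σ, word_perm (fun a => fi n (v' a)) ρ]
  simp only [smul_mul_assoc, mul_smul_comm, map_zsmul]
  rw [smul_comm]

theorem yy_comm (n : ℕ) (i j : Fin n) : Commute (yy n i) (yy n j) :=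
  (gen_pair_comm n _ _ _).mul_right (gen_pair_comm n _ _ _)

theorem yy_sq (n : ℕ) (i : Fin n) : yy n i * yy n i = 0 := by
  have : Commute (yy n i) (ff n i) := gen_pair_comm n _ _ _
  rw [show yy n i * yy n i = ee n i * (ff n i * yy n i) by simp only [yy, mul_assoc], ← this.eq,
    yy, mul_assoc (ee n i) (ff n i) (ff n i)]
  unfold ff
  rw [gen_sq]; simp

theorem ofFn_yy (n : ℕ) : (List.ofFn fun a => yy n a).prod = (List.ofFn fun a => gen n a).prod := by
  have key : ∀ l : List (Fin n), (l.map (yy n)).prod =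
      (l.map (ee n)).prod * (l.reverse.map (ff n)).prod := by
    intro l
    induction l using List.reverseRecOn with
    | nil => simp
    | append_singleton l i ih =>
      rw [List.map_append, List.prod_append, ih, List.map_append, List.prod_append,
        List.reverse_append]
      simp only [List.map_cons, List.map_nil, List.prod_cons, List.prod_nil, mul_one,
        List.reverse_cons, List.reverse_nil, List.nil_append, List.singleton_append]
      have hc : Commute (yy n i) ((l.reverse.map (ff n)).prod) := by
        apply Commute.list_prod_right
        intro x hx
        rw [List.mem_map] at hx
        obtain ⟨j, -, rfl⟩ := hx
        exact gen_pair_comm n _ _ _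
      rw [mul_assoc, ← hc.eq, yy]
      simp only [mul_assoc]
  have h := key (List.finRange n)
  rw [List.ofFn_eq_map, h]
  have e : (List.ofFn fun a : Fin (2 * n) => gen n a) =
      List.ofFn (fun a : Fin (n + n) => gen n (finCongr (two_mul n).symm a)) := by
    apply List.ext_getElem
    · simp; omega
    · intro i h1 h2
      simp
  rw [e, List.ofFn_add, List.prod_append]
  rw [← List.ofFn_eq_map]
  congr 1
  congr 1
  apply List.ext_getElem
  · simp
  · intro i h1 h2
    simp [ff, fi, sumEquiv, Fin.rev]
    congr 1
    ext
    simp at h2 ⊢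
    omega

theorem tau_pow_aux (n m : ℕ) : ∀ l : List (Fin n), l.Nodup → l.length + m = n →
    (l.map (yy n)).prod * tau n ^ m = (m.factorial : ℂ) • (List.ofFn fun a => yy n a).prod := by
  induction m with
  | zero =>
    intro l hl hlen
    rw [List.ofFn_eq_map]
    simp only [pow_zero, mul_one, Nat.factorial_zero, Nat.cast_one, one_smul]
    apply List.Perm.prod_eq'
    · apply List.Perm.map
      rw [List.perm_ext_iff_of_nodup hl (List.nodup_finRange n)]
      intro a
      simp only [List.mem_finRange, iff_true]
      have hc : l.toFinset.card = Fintype.card (Fin n) := by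
        rw [List.toFinset_card_of_nodup hl, Fintype.card_fin]; omega
      have := (Finset.card_eq_iff_eq_univ _).mp hc
      rw [← List.mem_toFinset, this]; simp
    · apply List.pairwise_of_forall_mem_list
      intro a ha b hb
      rw [List.mem_map] at ha hb
      obtain ⟨i, -, rfl⟩ := ha
      obtain ⟨j, -, rfl⟩ := hb
      exact yy_comm n i j
  | succ m ih =>
    intro l hl hlen
    rw [pow_succ', ← mul_assoc]
    conv_lhs => rw [tau, Finset.mul_sum, Finset.sum_mul]
    rw [← tau]
    have hz : ∀ i ∈ l, (l.map (yy n)).prod * yy n i = 0 := by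
      intro i hi
      obtain ⟨l1, l2, rfl⟩ := List.append_of_mem hi
      have hc : Commute (yy n i) ((l2.map (yy n)).prod) := by
        apply Commute.list_prod_right
        intro x hx
        rw [List.mem_map] at hx
        obtain ⟨j, -, rfl⟩ := hx
        exact yy_comm n _ _
      rw [List.map_append, List.prod_append, List.map_cons, List.prod_cons, mul_assoc,
        mul_assoc, ← hc.eq, ← mul_assoc (yy n i), yy_sq]
      simp
    have hs : ∀ i, (l.map (yy n)).prod * yy n i * tau n ^ m =
        if i ∈ l.toFinset then 0 else (m.factorial : ℂ) • (List.ofFn fun a => yy n a).prod := by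
      intro i
      split_ifs with hi
      · rw [hz i (List.mem_toFinset.mp hi), zero_mul]
      · rw [List.mem_toFinset] at hi
        rw [← ih (l ++ [i])]
        · simp
        · rw [List.nodup_append]
          refine ⟨hl, by simp, ?_⟩
          intro a ha b hb
          simp at hb
          subst hb
          rintro rfl
          exact hi ha
        · simp; omega
    simp only [hs]
    rw [Finset.sum_ite]
    simp only [Finset.sum_const_zero, zero_add, Finset.sum_const]
    have hcard : (Finset.univ.filter (fun x => x ∉ l.toFinset)).card = m + 1 := by
      rw [← Finset.compl_filter, Finset.card_compl]
      have : (Finset.univ.filter (fun x => x ∈ l.toFinset)) = l.toFinset := by ext; simp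
      rw [this, List.toFinset_card_of_nodup hl, Fintype.card_fin]; omega
    rw [hcard, ← Nat.cast_smul_eq_nsmul ℂ, smul_smul, Nat.factorial_succ]
    push_cast
    rfl

theorem cc_diag (n m k : ℕ) (hk : 2 * k + m = n) (v : Fin (2 * k) → Fin n)
    (hv : Function.Injective v) : cc n m v v = (-1) ^ k * m.factorial := by
  unfold cc
  rw [← pprod_word, ← pprod_word, pprod_mul]
  · have : (fun i j => ee n i * ee n j * (ff n i * ff n j)) =
        fun i j => (-1 : ℂ) • (yy n i * yy n j) := by
      funext i j
      unfold yy
      have := gen_anti n (ei n j) (fi n i)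
      rw [mul_assoc, ← mul_assoc (ee n j), show ee n j * ff n i = _ from this]
      simp [mul_assoc, ee, ff]
    rw [this, pprod_smul, pprod_word, smul_mul_assoc, map_smul]
    have h2 := tau_pow_aux n m (List.ofFn v) (List.nodup_ofFn.mpr hv) (by simp [hk])
    rw [List.map_ofFn] at h2
    rw [show (List.ofFn fun a => yy n (v a)) = List.ofFn (yy n ∘ v) from rfl, h2, map_smul, ofFn_yy,
      lam_id]
    simp
  · intro i j k l
    exact (gen_pair_comm n _ _ _).mul_right (gen_pair_comm n _ _ _)

/-! ### The tensor algebra `Λ ⊗ End(P)` -/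

open scoped TensorProduct

abbrev EP (n : ℕ) := Module.End ℂ (P n)
abbrev TT (n : ℕ) := Lam n ⊗[ℂ] EP n

def LL (n : ℕ) : TT n →ₗ[ℂ] EP n :=
  TensorProduct.lift ((LinearMap.lsmul ℂ (EP n)) ∘ₗ lam n)

theorem LL_tmul (n : ℕ) (x : Lam n) (A : EP n) : LL n (x ⊗ₜ[ℂ] A) = lam n x • A := by
  simp [LL]

def BB {X : Type*} [Fintype X] (n : ℕ) (g : X → Lam n) (A : X → X → EP n) : TT n :=
  ∑ i, ∑ j, (g i * g j) ⊗ₜ[ℂ] A i j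

theorem BB_pow {X : Type*} [Fintype X] (n k : ℕ) (g : X → Lam n) (A : X → X → EP n) :
    BB n g A ^ k = ∑ v : Fin (2 * k) → X,
      (List.ofFn fun a => g (v a)).prod ⊗ₜ[ℂ] pprod A v := by
  refine (sum_pow_pairs (R := TT n) (fun i j => (g i * g j) ⊗ₜ[ℂ] A i j) k).trans ?_
  refine Finset.sum_congr rfl fun v _ => ?_
  rw [pprod_tmul (fun i j => g i * g j) A, pprod_word]

theorem LL_Pf (n : ℕ) (A : Matrix (Fin (2 * n)) (Fin (2 * n)) (EP n)) :
    LL n (BB n (gen n) (fun i j => A i j) ^ n) = ((2 : ℂ) ^ n * n.factorial) • Pf A := by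
  have h0 : ((2 : ℂ) ^ n * n.factorial) ≠ 0 := by
    have : (n.factorial : ℂ) ≠ 0 := by exact_mod_cast n.factorial_ne_zero
    exact mul_ne_zero (pow_ne_zero _ two_ne_zero) this
  rw [BB_pow, map_sum, Pf, smul_smul, mul_inv_cancel₀ h0, one_smul, sum_inj_perm]
  · refine Finset.sum_congr rfl fun σ _ => ?_
    rw [LL_tmul, word_perm (fun a => a) σ, map_zsmul, lam_id, smul_assoc, one_smul]
    rfl
  · intro v hv
    rw [LL_tmul, word_not_inj v hv]
    simp

def tt (n : ℕ) : TT n := tau n ⊗ₜ[ℂ] (1 : EP n)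

theorem LL_abt (n p q m : ℕ) (A B : Fin n → Fin n → EP n) :
    LL n (BB n (ee n) A ^ p * BB n (ff n) B ^ q * tt n ^ m) =
      ∑ v : Fin (2 * p) → Fin n, ∑ v' : Fin (2 * q) → Fin n,
        cc n m v v' • (pprod A v * pprod B v') := by
  rw [BB_pow, BB_pow, tt, Algebra.TensorProduct.tmul_pow, one_pow, Finset.sum_mul_sum,
    Finset.sum_mul, map_sum]
  refine Finset.sum_congr rfl fun v _ => ?_
  rw [Finset.sum_mul, map_sum]
  refine Finset.sum_congr rfl fun v' _ => ?_
  rw [Algebra.TensorProduct.tmul_mul_tmul, Algebra.TensorProduct.tmul_mul_tmul, LL_tmul, mul_one]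
  rfl

theorem LL_abt_ne (n p q m : ℕ) (A B : Fin n → Fin n → EP n) (h : p ≠ q) :
    LL n (BB n (ee n) A ^ p * BB n (ff n) B ^ q * tt n ^ m) = 0 := by
  rw [LL_abt]
  refine Finset.sum_eq_zero fun v _ => Finset.sum_eq_zero fun v' _ => ?_
  rw [cc_card n m v v' (by omega), zero_smul]

theorem Pf_eq_pprod (n k : ℕ) (A : Fin n → Fin n → EP n) (w : Fin (2 * k) → Fin n) :
    ∑ σ : Equiv.Perm (Fin (2 * k)), (Equiv.Perm.sign σ : ℤ) • pprod A (fun a => w (σ a)) =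
    ((2 : ℂ) ^ k * k.factorial) • Pf (Matrix.of fun a b : Fin (2 * k) => A (w a) (w b)) := by
  have h0 : ((2 : ℂ) ^ k * k.factorial) ≠ 0 := by
    have : (k.factorial : ℂ) ≠ 0 := by exact_mod_cast k.factorial_ne_zero
    exact mul_ne_zero (pow_ne_zero _ two_ne_zero) this
  rw [Pf, smul_smul, mul_inv_cancel₀ h0, one_smul]
  rfl

theorem cc_sets (n m k : ℕ) (hk : 2 * k + m = n) (I J : {I : Finset (Fin n) // I.card = 2 * k}) :
    cc n m (fun a => (I.1.orderIsoOfFin I.2 a : Fin n)) (fun a => (J.1.orderIsoOfFin J.2 a : Fin n)) =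
      if I = J then (-1 : ℂ) ^ k * m.factorial else 0 := by
  have hinj : Function.Injective (fun a => (I.1.orderIsoOfFin I.2 a : Fin n)) := fun a b h =>
    (I.1.orderIsoOfFin I.2).injective (Subtype.ext h)
  split_ifs with h
  · subst h
    exact cc_diag n m k hk _ hinj
  · have hns : ¬ I.1 ⊆ J.1 := by
      intro hs
      apply h
      apply Subtype.ext
      exact Finset.eq_of_subset_of_card_le hs (by rw [I.2, J.2])
    obtain ⟨x, hx, hxJ⟩ := Finset.not_subset.mp hns
    apply cc_range n m _ _ hinj ((I.1.orderIsoOfFin I.2).symm ⟨x, hx⟩)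
    intro b hb
    apply hxJ
    simp only [OrderIso.apply_symm_apply] at hb
    rw [← hb]
    exact (J.1.orderIsoOfFin J.2 b).2

theorem LL_Gamma (n m k : ℕ) (hk : 2 * k + m = n) :
    ∑ v : Fin (2 * k) → Fin n, ∑ v' : Fin (2 * k) → Fin n,
        cc n m v v' • (pprod (Mop n) v * pprod (Dop n) v') =
      ((-1 : ℂ) ^ k * m.factorial * ((2 : ℂ) ^ k * k.factorial) ^ 2) • Gamma n k := by
  rw [sum_inj_subset]
  swap
  · intro v hv
    refine Finset.sum_eq_zero fun v' _ => ?_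
    rw [cc_not_inj_left n m v v' hv, zero_smul]
  rw [Gamma, Finset.smul_sum]
  refine Finset.sum_congr rfl fun I _ => ?_
  have h1 : ∀ v : Fin (2 * k) → Fin n, ∑ v' : Fin (2 * k) → Fin n,
        cc n m v v' • (pprod (Mop n) v * pprod (Dop n) v') =
      ∑ J : {I : Finset (Fin n) // I.card = 2 * k}, ∑ ρ : Equiv.Perm (Fin (2 * k)),
        cc n m v (fun a => (J.1.orderIsoOfFin J.2 (ρ a) : Fin n)) •
          (pprod (Mop n) v * pprod (Dop n) (fun a => (J.1.orderIsoOfFin J.2 (ρ a) : Fin n))) := by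
    intro v
    rw [sum_inj_subset]
    intro v' hv
    rw [cc_not_inj_right n m v v' hv, zero_smul]
  simp only [h1]
  have h2 : ∀ (J : {I : Finset (Fin n) // I.card = 2 * k}) (σ ρ : Equiv.Perm (Fin (2 * k))),
      cc n m (fun a => (I.1.orderIsoOfFin I.2 (σ a) : Fin n))
        (fun a => (J.1.orderIsoOfFin J.2 (ρ a) : Fin n)) =
      (Equiv.Perm.sign σ : ℤ) • (Equiv.Perm.sign ρ : ℤ) •
        (if I = J then (-1 : ℂ) ^ k * m.factorial else 0) := by
    intro J σ ρ
    rw [← cc_sets n m k hk I J]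
    exact cc_perm n m (fun a => (I.1.orderIsoOfFin I.2 a : Fin n))
      (fun a => (J.1.orderIsoOfFin J.2 a : Fin n)) σ ρ
  simp only [h2]
  have h3 : ∀ σ : Equiv.Perm (Fin (2 * k)), ∑ J : {I : Finset (Fin n) // I.card = 2 * k},
      ∑ ρ : Equiv.Perm (Fin (2 * k)), ((Equiv.Perm.sign σ : ℤ) • (Equiv.Perm.sign ρ : ℤ) •
        (if I = J then (-1 : ℂ) ^ k * m.factorial else 0)) •
        (pprod (Mop n) (fun a => (I.1.orderIsoOfFin I.2 (σ a) : Fin n)) *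
          pprod (Dop n) (fun a => (J.1.orderIsoOfFin J.2 (ρ a) : Fin n))) =
      ((-1 : ℂ) ^ k * m.factorial) •
        (((Equiv.Perm.sign σ : ℤ) • pprod (Mop n) (fun a => (I.1.orderIsoOfFin I.2 (σ a) : Fin n))) *
         ∑ ρ : Equiv.Perm (Fin (2 * k)), (Equiv.Perm.sign ρ : ℤ) •
          pprod (Dop n) (fun a => (I.1.orderIsoOfFin I.2 (ρ a) : Fin n))) := by
    intro σ
    rw [Finset.sum_eq_single I]
    · rw [Finset.mul_sum, Finset.smul_sum]
      refine Finset.sum_congr rfl fun ρ _ => ?_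
      simp only [if_true]
      rw [smul_mul_assoc, mul_smul_comm, smul_assoc, smul_assoc]
      rw [smul_comm ((-1 : ℂ) ^ k * _) (Equiv.Perm.sign σ : ℤ),
        smul_comm ((-1 : ℂ) ^ k * _) (Equiv.Perm.sign ρ : ℤ)]
    · intro J _ hJ
      refine Finset.sum_eq_zero fun ρ _ => ?_
      rw [if_neg (Ne.symm hJ)]
      simp
    · simp
  simp only [h3]
  rw [← Finset.smul_sum, ← Finset.sum_mul,
    Pf_eq_pprod n k (Mop n) (fun a => (I.1.orderIsoOfFin I.2 a : Fin n)),
    Pf_eq_pprod n k (Dop n) (fun a => (I.1.orderIsoOfFin I.2 a : Fin n)), smul_mul_smul_comm,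
    smul_smul]
  congr 1
  ring

theorem LL_abt_eq (n k m : ℕ) (hk : 2 * k + m = n) :
    LL n (BB n (ee n) (Mop n) ^ k * BB n (ff n) (fun i j => (-1 : ℂ) • Dop n i j) ^ k * tt n ^ m) =
      ((m.factorial : ℂ) * ((2 : ℂ) ^ k * k.factorial) ^ 2) • Gamma n k := by
  rw [LL_abt]
  have h : ∀ (v v' : Fin (2 * k) → Fin n), cc n m v v' •
      (pprod (Mop n) v * pprod (fun i j => (-1 : ℂ) • Dop n i j) v') =
      ((-1 : ℂ) ^ k) • (cc n m v v' • (pprod (Mop n) v * pprod (Dop n) v')) := by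
    intro v v'
    rw [pprod_smul (-1 : ℂ) (Dop n) v', mul_smul_comm, smul_comm]
  simp only [h, ← Finset.smul_sum]
  rw [LL_Gamma n m k hk, smul_smul]
  congr 1
  have : ((-1 : ℂ) ^ k) * (-1) ^ k = 1 := by rw [← mul_pow]; simp
  linear_combination ((m.factorial : ℂ) * ((2 : ℂ) ^ k * k.factorial) ^ 2) * this

/-! ### Relations -/

theorem pderiv_mul_X (n : ℕ) (s t : Idx n) :
    ((pderiv s : Derivation ℂ (P n) (P n)) : P n →ₗ[ℂ] P n) * LinearMap.mulLeft ℂ (X t : P n) =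
      LinearMap.mulLeft ℂ (X t : P n) * ((pderiv s : Derivation ℂ (P n) (P n)) : P n →ₗ[ℂ] P n) +
        (if s = t then (1 : ℂ) else 0) • (1 : EP n) := by
  apply LinearMap.ext
  intro x
  have h : pderiv s (X t : P n) = if s = t then 1 else 0 := by
    rw [pderiv_X, Pi.single_apply]
    simp [eq_comm]
  simp only [Module.End.mul_apply, LinearMap.mulLeft_apply, LinearMap.add_apply,
    LinearMap.smul_apply, Module.End.one_apply, Derivation.coeFn_coe, Derivation.leibniz, smul_eq_mul, h]
  split_ifs <;> simp

theorem DM_comm_lt (n : ℕ) (i j k l : Fin n) (hij : i < j) (hkl : k < l) :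
    Dop n i j * Mop n k l = Mop n k l * Dop n i j +
      ((if i = k ∧ j = l then (1 : ℂ) else 0) - (if i = l ∧ j = k then (1 : ℂ) else 0)) •
        (1 : EP n) := by
  have h : ¬ (i = l ∧ j = k) := by rintro ⟨rfl, rfl⟩; exact lt_asymm hij hkl
  unfold Dop Mop
  rw [dif_pos hij, dif_pos hkl, pderiv_mul_X, if_neg h, sub_zero]
  simp only [Subtype.mk.injEq, Prod.mk.injEq]

theorem Dop_swap (n : ℕ) (i j : Fin n) (h : i < j) : Dop n j i = - Dop n i j := by
  simp [Dop, h, not_lt_of_gt h]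

theorem Mop_swap (n : ℕ) (i j : Fin n) (h : i < j) : Mop n j i = - Mop n i j := by
  simp [Mop, h, not_lt_of_gt h]

theorem Dop_self (n : ℕ) (i : Fin n) : Dop n i i = 0 := by simp [Dop]

theorem Mop_self (n : ℕ) (i : Fin n) : Mop n i i = 0 := by simp [Mop]

theorem gen_neg_right {E : Type*} [Ring E] [Algebra ℂ E] (x y : E) (c c' : ℂ)
    (h : x * y = y * x + c • (1 : E)) (hc : c' = -c) : x * (-y) = (-y) * x + c' • (1 : E) := by
  rw [hc, mul_neg, h, neg_mul, neg_smul, neg_add]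

theorem gen_neg_left {E : Type*} [Ring E] [Algebra ℂ E] (x y : E) (c c' : ℂ)
    (h : x * y = y * x + c • (1 : E)) (hc : c' = -c) : (-x) * y = y * (-x) + c' • (1 : E) := by
  rw [hc, neg_mul, h, mul_neg, neg_smul, neg_add]

theorem DM_comm (n : ℕ) (i j k l : Fin n) :
    Dop n i j * Mop n k l = Mop n k l * Dop n i j +
      ((if i = k ∧ j = l then (1 : ℂ) else 0) - (if i = l ∧ j = k then (1 : ℂ) else 0)) •
        (1 : EP n) := by
  have z1 : (if i = k ∧ i = l then (1 : ℂ) else 0) - (if i = l ∧ i = k then (1 : ℂ) else 0) = 0 := by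
    simp only [and_comm, sub_self]
  have z2 : (if i = k ∧ j = k then (1 : ℂ) else 0) - (if i = k ∧ j = k then (1 : ℂ) else 0) = 0 := by
    simp
  rcases lt_trichotomy i j with hij | rfl | hij
  · rcases lt_trichotomy k l with hkl | rfl | hkl
    · exact DM_comm_lt n i j k l hij hkl
    · rw [Mop_self, z2]; simp
    · rw [Mop_swap n l k hkl]
      exact gen_neg_right _ _ _ _ (DM_comm_lt n i j l k hij hkl) (by ring)
  · rw [Dop_self, z1]; simp
  · rcases lt_trichotomy k l with hkl | rfl | hkl
    · rw [Dop_swap n j i hij]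
      refine gen_neg_left _ _ _ _ (DM_comm_lt n j i k l hij hkl) ?_
      simp only [and_comm (a := j = k), and_comm (a := j = l)]; ring
    · rw [Mop_self, z2]; simp
    · rw [Dop_swap n j i hij, Mop_swap n l k hkl]
      refine gen_neg_left _ _ _ _ (gen_neg_right _ _ _ _ (DM_comm_lt n j i l k hij hkl) rfl) ?_
      simp only [and_comm (a := j = k), and_comm (a := j = l)]; ring

theorem tmul_one_comm (n : ℕ) (x y : Lam n) (A : EP n) (h : Commute x y) :
    Commute (x ⊗ₜ[ℂ] (1 : EP n) : TT n) (y ⊗ₜ[ℂ] A) := by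
  unfold Commute SemiconjBy
  rw [Algebra.TensorProduct.tmul_mul_tmul, Algebra.TensorProduct.tmul_mul_tmul, h.eq, one_mul,
    mul_one]

theorem tt_comm_BB {X : Type*} [Fintype X] (n : ℕ) (g : X → Fin (2 * n)) (A : X → X → EP n) :
    Commute (tt n) (BB n (fun x => gen n (g x)) A) := by
  unfold BB tt
  refine Commute.sum_right _ _ _ fun i _ => Commute.sum_right _ _ _ fun j _ => ?_
  apply tmul_one_comm
  unfold tau
  refine Commute.sum_left _ _ _ fun k _ => ?_
  exact (gen_pair_comm n _ _ _).mul_right (gen_pair_comm n _ _ _)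

theorem eeff (n : ℕ) (i j : Fin n) : ee n i * ee n j * (ff n i * ff n j) = -(yy n i * yy n j) := by
  unfold yy
  have := gen_anti n (ei n j) (fi n i)
  rw [mul_assoc, ← mul_assoc (ee n j), show ee n j * ff n i = _ from this]
  simp [mul_assoc, ee, ff]

theorem eeff' (n : ℕ) (i j : Fin n) : ee n j * ee n i * (ff n i * ff n j) = yy n i * yy n j := by
  have : ff n i * ff n j = -(ff n j * ff n i) := gen_anti n _ _
  rw [this, mul_neg, eeff, neg_neg, (yy_comm n j i).eq]

theorem ffee_comm (n : ℕ) (i j k l : Fin n) :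
    Commute (ff n i * ff n j) (ee n k * ee n l) :=
  (gen_pair_comm n _ _ _).mul_right (gen_pair_comm n _ _ _)

theorem gen_ite_smul {V : Type*} [AddCommGroup V] [Module ℂ V] (p q p' q' : Prop) [Decidable p]
    [Decidable q] [Decidable p'] [Decidable q'] (Z : V) :
    ((if p ∧ q then (1 : ℂ) else 0) - (if p' ∧ q' then (1 : ℂ) else 0)) • Z =
      (if q then (if p then Z else 0) else 0) - (if p' then (if q' then Z else 0) else 0) := by
  by_cases hp : p <;> by_cases hq : q <;> by_cases hp' : p' <;> by_cases hq' : q' <;>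
    simp [hp, hq, hp', hq']

theorem gen_BB {V : Type*} [AddCommGroup V] [Module ℂ V] (A B t : V) (u : ℂ) :
    A + u • t + (u • t + B) = A + B + (2 * u) • t := by
  rw [two_mul, add_smul]
  abel

theorem ba_rel (n : ℕ) :
    BB n (ff n) (fun i j => (-1 : ℂ) • Dop n i j) * BB n (ee n) (Mop n) =
      BB n (ee n) (Mop n) * BB n (ff n) (fun i j => (-1 : ℂ) • Dop n i j) +
        (2 : ℂ) • (tt n ^ 2) := by
  have hterm : ∀ i j k l : Fin n,
      ((ff n i * ff n j) ⊗ₜ[ℂ] ((-1 : ℂ) • Dop n i j) : TT n) *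
        ((ee n k * ee n l) ⊗ₜ[ℂ] Mop n k l) =
      ((ee n k * ee n l) ⊗ₜ[ℂ] Mop n k l) *
        ((ff n i * ff n j) ⊗ₜ[ℂ] ((-1 : ℂ) • Dop n i j) : TT n) +
      ((if i = l ∧ j = k then (1 : ℂ) else 0) - (if i = k ∧ j = l then (1 : ℂ) else 0)) •
        ((ee n k * ee n l * (ff n i * ff n j)) ⊗ₜ[ℂ] (1 : EP n)) := by
    intro i j k l
    rw [Algebra.TensorProduct.tmul_mul_tmul, Algebra.TensorProduct.tmul_mul_tmul,
      (ffee_comm n i j k l).eq, smul_mul_assoc, DM_comm, mul_smul_comm, smul_add, smul_smul,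
      TensorProduct.tmul_add, TensorProduct.tmul_smul _ _ (1 : EP n)]
    congr 2
    ring
  have hsum : ∀ i j : Fin n, ∑ k, ∑ l,
      ((if i = l ∧ j = k then (1 : ℂ) else 0) - (if i = k ∧ j = l then (1 : ℂ) else 0)) •
        ((ee n k * ee n l * (ff n i * ff n j)) ⊗ₜ[ℂ] (1 : EP n) : TT n) =
      (2 : ℂ) • ((yy n i * yy n j) ⊗ₜ[ℂ] (1 : EP n)) := by
    intro i j
    have hz : ∀ k l : Fin n,
      ((if i = l ∧ j = k then (1 : ℂ) else 0) - (if i = k ∧ j = l then (1 : ℂ) else 0)) •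
        ((ee n k * ee n l * (ff n i * ff n j)) ⊗ₜ[ℂ] (1 : EP n) : TT n) =
      (if j = k then (if i = l then
        ((ee n k * ee n l * (ff n i * ff n j)) ⊗ₜ[ℂ] (1 : EP n) : TT n) else 0) else 0) -
      (if i = k then (if j = l then
        ((ee n k * ee n l * (ff n i * ff n j)) ⊗ₜ[ℂ] (1 : EP n) : TT n) else 0) else 0) := by
      intro k l
      exact gen_ite_smul (V := TT n) (i = l) (j = k) (i = k) (j = l) _
    simp only [hz, Finset.sum_sub_distrib]
    have hd : ∀ (x y : Fin n) (Z : Fin n → Fin n → TT n),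
        ∑ k, ∑ l, (if x = k then (if y = l then Z k l else 0) else 0) = Z x y := by
      intro x y Z
      rw [Finset.sum_eq_single x, Finset.sum_eq_single y]
      · simp
      · intro b _ hb; simp [Ne.symm hb]
      · simp
      · intro b _ hb; simp [Ne.symm hb]
      · simp
    rw [hd j i (fun k l => ((ee n k * ee n l * (ff n i * ff n j)) ⊗ₜ[ℂ] (1 : EP n) : TT n)),
      hd i j (fun k l => ((ee n k * ee n l * (ff n i * ff n j)) ⊗ₜ[ℂ] (1 : EP n) : TT n)),
      eeff, eeff', TensorProduct.neg_tmul, sub_neg_eq_add, two_smul]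
  have ht : tt n ^ 2 = ∑ i, ∑ j, ((yy n i * yy n j) ⊗ₜ[ℂ] (1 : EP n) : TT n) := by
    rw [tt, Algebra.TensorProduct.tmul_pow, one_pow, pow_two, tau, Finset.sum_mul_sum]
    rw [TensorProduct.sum_tmul]
    refine Finset.sum_congr rfl fun i _ => ?_
    rw [TensorProduct.sum_tmul]
  rw [ht]
  have hb : BB n (ff n) (fun i j => (-1 : ℂ) • Dop n i j) = ∑ i, ∑ j,
      ((ff n i * ff n j) ⊗ₜ[ℂ] ((-1 : ℂ) • Dop n i j) : TT n) := rfl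
  rw [hb]
  simp only [Finset.sum_mul, Finset.mul_sum, Finset.smul_sum]
  rw [← Finset.sum_add_distrib]
  refine Finset.sum_congr rfl fun i _ => ?_
  rw [← Finset.sum_add_distrib]
  refine Finset.sum_congr rfl fun j _ => ?_
  rw [← hsum, BB]
  simp only [Finset.sum_mul, Finset.mul_sum]
  rw [← Finset.sum_add_distrib]
  refine Finset.sum_congr rfl fun k _ => ?_
  rw [← Finset.sum_add_distrib]
  refine Finset.sum_congr rfl fun l _ => ?_
  exact hterm i j k l

/-! ### Decomposition of `Φ̃` -/

theorem J_left (n : ℕ) (i j : Fin n) : Jmat (EP n) n i (Fin.rev j) = if i = j then 1 else 0 := by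
  have := i.isLt
  have := j.isLt
  simp only [Jmat, Matrix.of_apply, Fin.val_rev, Fin.ext_iff]
  congr 1
  apply propext
  omega

theorem J_right (n : ℕ) (i j : Fin n) : Jmat (EP n) n (Fin.rev i) j = if i = j then 1 else 0 := by
  have := i.isLt
  have := j.isLt
  simp only [Jmat, Matrix.of_apply, Fin.val_rev, Fin.ext_iff]
  congr 1
  apply propext
  omega

theorem JDJ (n : ℕ) (A : Matrix (Fin n) (Fin n) (EP n)) (i j : Fin n) :
    (Jmat (EP n) n * A * Jmat (EP n) n) (Fin.rev i) (Fin.rev j) = A i j := by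
  rw [Matrix.mul_apply]
  simp only [Matrix.mul_apply, J_left, J_right]
  simp

theorem sum_ef {R : Type*} [AddCommMonoid R] (n : ℕ) (F : Fin (2 * n) → R) :
    ∑ c, F c = ∑ i, F (ei n i) + ∑ i, F (fi n i) := by
  rw [← (sumEquiv n).sum_comp, Fintype.sum_sum_type]
  congr 1
  exact (Equiv.sum_comp Fin.revPerm (fun i => F (sumEquiv n (Sum.inr i)))).symm

theorem Phi_ee (n : ℕ) (u : ℂ) (i j : Fin n) : PhiTilde n u (ei n i) (ei n j) = Mop n i j := by
  simp [PhiTilde, ei]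

theorem Phi_ef (n : ℕ) (u : ℂ) (i j : Fin n) :
    PhiTilde n u (ei n i) (fi n j) = if i = j then u • (1 : EP n) else 0 := by
  simp [PhiTilde, ei, fi, J_left]

theorem Phi_fe (n : ℕ) (u : ℂ) (i j : Fin n) :
    PhiTilde n u (fi n i) (ei n j) = if i = j then -(u • (1 : EP n)) else 0 := by
  simp [PhiTilde, ei, fi, J_right]
  split_ifs <;> simp

theorem Phi_ff (n : ℕ) (u : ℂ) (i j : Fin n) :
    PhiTilde n u (fi n i) (fi n j) = (-1 : ℂ) • Dop n i j := by
  simp [PhiTilde, fi, JDJ]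
  exact (neg_one_smul ℂ _).symm

theorem BB_Phi (n : ℕ) (u : ℂ) : BB n (gen n) (fun i j => PhiTilde n u i j) =
    BB n (ee n) (Mop n) + BB n (ff n) (fun i j => (-1 : ℂ) • Dop n i j) + (2 * u) • tt n := by
  have h1 : ∀ i : Fin n, ∑ j, ((ee n i * ff n j) ⊗ₜ[ℂ] (if i = j then u • (1 : EP n) else 0) : TT n) =
      u • (yy n i ⊗ₜ[ℂ] (1 : EP n)) := by
    intro i
    rw [Finset.sum_eq_single i]
    · rw [if_pos rfl, TensorProduct.tmul_smul]; rfl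
    · intro j _ hj; rw [if_neg (Ne.symm hj), TensorProduct.tmul_zero]
    · simp
  have h2 : ∀ i : Fin n,
      ∑ j, ((ff n i * ee n j) ⊗ₜ[ℂ] (if i = j then -(u • (1 : EP n)) else 0) : TT n) =
      u • (yy n i ⊗ₜ[ℂ] (1 : EP n)) := by
    intro i
    rw [Finset.sum_eq_single i]
    · have : ff n i * ee n i = -(yy n i) := gen_anti n _ _
      rw [if_pos rfl, this, TensorProduct.neg_tmul, TensorProduct.tmul_neg, neg_neg,
        TensorProduct.tmul_smul]
    · intro j _ hj; rw [if_neg (Ne.symm hj), TensorProduct.tmul_zero]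
    · simp
  have ht : tt n = ∑ i, (yy n i ⊗ₜ[ℂ] (1 : EP n) : TT n) := by
    rw [tt, tau, TensorProduct.sum_tmul]
  unfold BB
  rw [sum_ef]
  simp only [sum_ef n (fun c => (gen n _ * gen n c) ⊗ₜ[ℂ] PhiTilde n u _ c), Phi_ee, Phi_ef, Phi_fe,
    Phi_ff, Finset.sum_add_distrib]
  have h1' := Finset.sum_congr (s₁ := Finset.univ) rfl (fun i (_ : i ∈ Finset.univ) => h1 i)
  have h2' := Finset.sum_congr (s₁ := Finset.univ) rfl (fun i (_ : i ∈ Finset.univ) => h2 i)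
  rw [← Finset.smul_sum, ← ht] at h1' h2'
  unfold ee ff at *
  rw [h1', h2']
  exact gen_BB _ _ _ _

/-! ### Final computation -/

theorem coef_eq (k j r : ℕ) (u : ℂ) :
    ((r + 2 * j + 2 * k).choose (2 * k + 2 * j) : ℂ) * ((2 * k + 2 * j).factorial *
      ((k.factorial : ℂ)⁻¹ * (k.factorial : ℂ)⁻¹ * (j.factorial : ℂ)⁻¹)) * (2 * u) ^ r *
      (((r + 2 * j).factorial : ℂ) * ((2 : ℂ) ^ k * k.factorial) ^ 2) =
    ((2 : ℂ) ^ (r + 2 * j + 2 * k) * (r + 2 * j + 2 * k).factorial) *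
      ((-Complex.I / 2) ^ (r + 2 * j) * (((r + 2 * j).factorial : ℂ) *
        (((-1 : ℂ)) ^ j * (2 : ℂ) ^ r / ((j.factorial : ℂ) * (r.factorial : ℂ)) *
          (Complex.I * u) ^ r))) := by
  have hc : ((r + 2 * j + 2 * k).choose (2 * k + 2 * j) : ℂ) * (2 * k + 2 * j).factorial *
      r.factorial = (r + 2 * j + 2 * k).factorial := by
    have := Nat.choose_mul_factorial_mul_factorial
      (show 2 * k + 2 * j ≤ r + 2 * j + 2 * k by omega)
    rw [show r + 2 * j + 2 * k - (2 * k + 2 * j) = r by omega] at this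
    exact_mod_cast this
  have hI : (-Complex.I / 2) ^ (r + 2 * j) * (-1 : ℂ) ^ j * (Complex.I * u) ^ r *
      2 ^ (r + 2 * j) = u ^ r := by
    have e1 : (-Complex.I / 2) ^ (r + 2 * j) * 2 ^ (r + 2 * j) = (-Complex.I) ^ (r + 2 * j) := by
      rw [← mul_pow]; congr 1; ring
    have e2 : (-Complex.I) ^ (2 * j) * (-1) ^ j = 1 := by
      rw [pow_mul, ← mul_pow]; simp
    have e3 : (-Complex.I) ^ r * (Complex.I * u) ^ r = u ^ r := by
      rw [← mul_pow, ← mul_assoc]; simp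
    calc _ = ((-Complex.I / 2) ^ (r + 2 * j) * 2 ^ (r + 2 * j)) * (-1) ^ j * (Complex.I * u) ^ r := by
          ring
      _ = ((-Complex.I) ^ r * (Complex.I * u) ^ r) * ((-Complex.I) ^ (2 * j) * (-1) ^ j) := by
          rw [e1, pow_add]; ring
      _ = _ := by rw [e2, e3, mul_one]
  have hk : (k.factorial : ℂ) ≠ 0 := by exact_mod_cast k.factorial_ne_zero
  have hj : (j.factorial : ℂ) ≠ 0 := by exact_mod_cast j.factorial_ne_zero
  have hr : (r.factorial : ℂ) ≠ 0 := by exact_mod_cast r.factorial_ne_zero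
  rw [← hc]
  generalize ((r + 2 * j + 2 * k).choose (2 * k + 2 * j) : ℂ) = C at *
  generalize ((2 * k + 2 * j).factorial : ℂ) = Q at *
  have h4 : ((2 : ℂ) ^ k) ^ 2 = 2 ^ (2 * k) := by rw [← pow_mul, mul_comm]
  calc _ = C * Q * (j.factorial : ℂ)⁻¹ * (2 ^ r * u ^ r) * ((r + 2 * j).factorial : ℂ) *
        (2 ^ (2 * k)) := by
        rw [mul_pow, mul_pow, h4]; field_simp
    _ = _ := by
        rw [← hI, pow_add 2 (r + 2 * j) (2 * k)]
        field_simp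

theorem gen_expand {R : Type*} [Ring R] [Algebra ℂ R] (a b t : R) (hta : Commute t a)
    (htb : Commute t b) (hab : b * a = a * b + (2 : ℂ) • t ^ 2) (c : ℂ) (n : ℕ) :
    (a + b + c • t) ^ n = ∑ q ∈ Finset.range (n + 1), ∑ x ∈ trip q,
        ((n.choose q : ℂ) * (q.factorial * ((x.1.factorial : ℂ)⁻¹ * (x.2.1.factorial : ℂ)⁻¹ *
          (x.2.2.factorial : ℂ)⁻¹)) * c ^ (n - q)) •
        (a ^ x.1 * b ^ x.2.1 * t ^ (2 * x.2.2 + (n - q))) := by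
  have hw := weyl _ _ (t ^ 2) hab (hta.pow_left 2) (htb.pow_left 2)
  have hs : Commute (a + b) (c • t) := ((hta.add_right htb).symm).smul_right _
  rw [hs.add_pow]
  refine Finset.sum_congr rfl fun q _ => ?_
  have hq : (a + b) ^ q = (q.factorial : ℂ) • dp (a + b) q := by
    have : (q.factorial : ℂ) ≠ 0 := by exact_mod_cast q.factorial_ne_zero
    rw [dp, smul_smul, mul_inv_cancel₀ this, one_smul]
  have hnat : ∀ (x : R) (N : ℕ), x * (N : R) = (N : ℂ) • x := by
    intro x N
    rw [← nsmul_eq_mul', Nat.cast_smul_eq_nsmul]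
  rw [hnat, hq, hw, smul_pow, Finset.smul_sum, Finset.sum_mul, Finset.smul_sum]
  refine Finset.sum_congr rfl fun x _ => ?_
  unfold dp
  rw [pow_add, pow_mul]
  simp only [smul_mul_assoc, mul_smul_comm, smul_smul, mul_assoc]
  congr 1
  ring

theorem LL_expand (n : ℕ) (u : ℂ) :
    LL n (BB n (gen n) (fun i j => PhiTilde n u i j) ^ n) =
      ∑ q ∈ Finset.range (n + 1), ∑ x ∈ trip q,
        ((n.choose q : ℂ) * (q.factorial * ((x.1.factorial : ℂ)⁻¹ * (x.2.1.factorial : ℂ)⁻¹ *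
          (x.2.2.factorial : ℂ)⁻¹)) * (2 * u) ^ (n - q)) •
        LL n (BB n (ee n) (Mop n) ^ x.1 * BB n (ff n) (fun i j => (-1 : ℂ) • Dop n i j) ^ x.2.1 *
          tt n ^ (2 * x.2.2 + (n - q))) := by
  rw [BB_Phi]
  have hta : Commute (tt n) (BB n (ee n) (Mop n)) := tt_comm_BB n (ei n) _
  have htb : Commute (tt n) (BB n (ff n) (fun i j => (-1 : ℂ) • Dop n i j)) := tt_comm_BB n (fi n) _
  refine (congrArg (LL n) (gen_expand _ _ _ hta htb (ba_rel n) (2 * u) n)).trans ?_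
  simp only [map_sum, map_smul]

/-- `Pf(Φ̃(u)) = Σ_{k=0}^{⌊n/2⌋} (−i/2)^{n−2k} H_{n−2k}(iu) Γ_k`. -/
theorem Pf_PhiTilde_Hermite (n : ℕ) (hn : 1 ≤ n) (u : ℂ) :
    Pf (PhiTilde n u) =
      ∑ k ∈ Finset.range (n / 2 + 1),
        ((-Complex.I / 2) ^ (n - 2 * k) * Hermite (n - 2 * k) (Complex.I * u)) •
          Gamma n k := by
  have h0 : ((2 : ℂ) ^ n * n.factorial) ≠ 0 := by
    have : (n.factorial : ℂ) ≠ 0 := by exact_mod_cast n.factorial_ne_zero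
    exact mul_ne_zero (pow_ne_zero _ two_ne_zero) this
  apply smul_right_injective _ h0
  change ((2 : ℂ) ^ n * n.factorial) • Pf (PhiTilde n u) = ((2 : ℂ) ^ n * n.factorial) • _
  rw [← LL_Pf, LL_expand]
  simp only [Hermite, Finset.mul_sum, Finset.smul_sum, Finset.sum_smul]
  rw [Finset.sum_sigma', Finset.sum_sigma']
  symm
  apply Finset.sum_of_injOn
    (fun y : (Σ _ : ℕ, ℕ) => (⟨2 * y.1 + 2 * y.2, (y.1, y.1, y.2)⟩ : Σ _ : ℕ, ℕ × ℕ × ℕ))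
  · rintro ⟨k, j⟩ _ ⟨k', j'⟩ _ h
    simp only [Sigma.mk.injEq, heq_eq_eq, Prod.mk.injEq] at h ⊢
    omega
  · rintro ⟨k, j⟩ h
    simp only [Finset.coe_sigma, Set.mem_sigma_iff, Finset.mem_coe, Finset.mem_range, mem_trip] at h ⊢
    omega
  · rintro ⟨q, p, p', j⟩ h hn'
    simp only [Finset.mem_sigma, Finset.mem_range, mem_trip] at h
    by_cases hp : p = p'
    · subst hp
      exfalso
      apply hn'
      refine ⟨⟨p, j⟩, ?_, ?_⟩
      · simp only [Finset.coe_sigma, Set.mem_sigma_iff, Finset.mem_coe, Finset.mem_range]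
        omega
      · simp only [Sigma.mk.injEq, heq_eq_eq, and_true]
        omega
    · rw [LL_abt_ne _ _ _ _ _ _ hp, smul_zero]
  · rintro ⟨k, j⟩ h
    simp only [Finset.mem_sigma, Finset.mem_range] at h ⊢
    obtain ⟨r, rfl⟩ : ∃ r, n = r + 2 * j + 2 * k := ⟨n - 2 * j - 2 * k, by omega⟩
    rw [LL_abt_eq _ _ _ (by omega), smul_smul, smul_smul]
    congr 1
    rw [show r + 2 * j + 2 * k - 2 * k = r + 2 * j by omega,
      show r + 2 * j - 2 * j = r by omega,
      show r + 2 * j + 2 * k - (2 * k + 2 * j) = r by omega,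
      show 2 * j + r = r + 2 * j by omega]
    exact (coef_eq k j r u).symm

end
end

section
/- Let R = ℂ[x_{i,j}, ξ_{i,j} : 1 ≤ i < j ≤ n] be a commutative polynomial ring, extend indices by x_{j,i} = −x_{i,j}, ξ_{j,i} = −ξ_{i,j}, x_{i,i} = ξ_{i,i} = 0, and write X = (x_{i,j})_{i,j=1}^n and Ξ = (ξ_{i,j})_{i,j=1}^n for the corresponding alternating n×n matrices over R. For u ∈ ℂ let B(u) be the alternating 2n×2n matrix over R with block form [[X, u·J_n], [−u·J_n, −J_n Ξ J_n]]. Then Pf(B(u)) = Σ_{k=0}^{⌊n/2⌋} u^{n−2k} Σ_{I ⊆ {1,…,n}, |I|=2k} Pf(x_I)·Pf(ξ_I), where x_I = (x_{i,j})_{i,j∈I} and ξ_I = (ξ_{i,j})_{i,j∈I}. -/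
open Matrix MvPolynomial

noncomputable section

/-- Commutative polynomial ring `ℂ[x_{i,j}, ξ_{i,j} : i < j]`. -/
abbrev R (n : ℕ) := MvPolynomial (Idx n ⊕ Idx n) ℂ

/-- The generic alternating matrix `X = (x_{i,j})`. -/
def xMat (n : ℕ) : Matrix (Fin n) (Fin n) (R n) := Matrix.of fun i j =>
  if h : i < j then X (.inl ⟨(i, j), h⟩)
  else if h' : j < i then -X (.inl ⟨(j, i), h'⟩)
  else 0

/-- The generic alternating matrix `Ξ = (ξ_{i,j})`. -/
def xiMat (n : ℕ) : Matrix (Fin n) (Fin n) (R n) := Matrix.of fun i j =>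
  if h : i < j then X (.inr ⟨(i, j), h⟩)
  else if h' : j < i then -X (.inr ⟨(j, i), h'⟩)
  else 0

/-- The alternating matrix `B(u) = [[X, u·J_n], [−u·J_n, −J_n Ξ J_n]]` over `R`. -/
def Bmat (n : ℕ) (u : ℂ) : Matrix (Fin (2 * n)) (Fin (2 * n)) (R n) :=
  Matrix.reindex (sumEquiv n) (sumEquiv n)
    (Matrix.fromBlocks (xMat n) (u • Jmat (R n) n) (-(u • Jmat (R n) n))
      (-(Jmat (R n) n * xiMat n * Jmat (R n) n)))

section Aux
open ExteriorAlgebra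

variable {A : Type*} [CommRing A] {V : Type*} [AddCommGroup V] [Module A V]

/-- unnormalised Pfaffian -/
def PfS {m : ℕ} (M : Matrix (Fin (2 * m)) (Fin (2 * m)) A) : A :=
  ∑ σ : Equiv.Perm (Fin (2 * m)), (Equiv.Perm.sign σ : ℤ) •
    ∏ i : Fin m, M (σ ⟨2 * (i : ℕ), by have := i.isLt; omega⟩)
      (σ ⟨2 * (i : ℕ) + 1, by have := i.isLt; omega⟩)

/-- the two-form -/
def om {κ : Type*} [Fintype κ] (w : κ → V) (M : Matrix κ κ A) : ExteriorAlgebra A V :=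
  ∑ a, ∑ b, M a b • (ι A (w a) * ι A (w b))

theorem om_pow {κ : Type*} [Fintype κ] (w : κ → V) (M : Matrix κ κ A) (m : ℕ) :
    om w M ^ m = ∑ g : Fin (2 * m) → κ,
      (∏ i : Fin m, M (g ⟨2 * (i : ℕ), by have := i.isLt; omega⟩)
        (g ⟨2 * (i : ℕ) + 1, by have := i.isLt; omega⟩)) •
        ιMulti A (2 * m) (w ∘ g) := by
  induction m with
  | zero =>
    simp only [pow_zero, Finset.univ_eq_empty, Finset.prod_empty, one_smul]
    rw [Fintype.sum_eq_single (fun i => i.elim0)]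
    · exact (ιMulti_zero_apply _).symm
    · intro x hx
      exact absurd (funext fun i => i.elim0) hx
  | succ m ih =>
    rw [pow_succ', ih]
    have e2 : ∀ f : (Fin (2 * m + 1 + 1) → κ) → ExteriorAlgebra A V,
        ∑ g, f g = ∑ a, ∑ b, ∑ g : Fin (2 * m) → κ, f (Fin.cons a (Fin.cons b g)) := by
      intro f
      rw [← Equiv.sum_comp (Fin.consEquiv (fun _ => κ)) f, Fintype.sum_prod_type]
      refine Finset.sum_congr rfl fun a _ => ?_
      rw [← Equiv.sum_comp (Fin.consEquiv (fun _ => κ)), Fintype.sum_prod_type]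
      rfl
    refine Eq.trans ?_ (e2 _).symm
    rw [om, Finset.sum_mul]
    refine Finset.sum_congr rfl fun a _ => ?_
    rw [Finset.sum_mul]
    refine Finset.sum_congr rfl fun b _ => ?_
    rw [Finset.mul_sum]
    refine Finset.sum_congr rfl fun g _ => ?_
    rw [Fin.prod_univ_succ]
    have h1 : ιMulti A (2 * m + 1 + 1) (w ∘ (Fin.cons a (Fin.cons b g) : Fin (2 * m + 1 + 1) → κ))
       = ι A (w a) * (ι A (w b) * ιMulti A (2 * m) (w ∘ g)) := by
      rw [ιMulti_succ_apply, ιMulti_succ_apply]; rfl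
    have h2 := congrArg (fun t => (M a b * ∏ i : Fin m, M (g ⟨2 * (i : ℕ), by have := i.isLt; omega⟩)
        (g ⟨2 * (i : ℕ) + 1, by have := i.isLt; omega⟩)) • t) h1
    refine Eq.trans ?_ h2.symm
    simp only [smul_mul_smul_comm, mul_assoc]

theorem om_pow_eq_zero {N m : ℕ} (w : Fin N → V) (M : Matrix (Fin N) (Fin N) A) (h : N < 2 * m) :
    om w M ^ m = 0 := by
  rw [om_pow]
  refine Finset.sum_eq_zero fun g _ => ?_
  rw [AlternatingMap.map_eq_zero_of_not_injective, smul_zero]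
  intro hg
  have := Fintype.card_le_of_injective g hg.of_comp
  simp at this
  omega

theorem om_pow_eq {m : ℕ} (w : Fin (2 * m) → V) (M : Matrix (Fin (2 * m)) (Fin (2 * m)) A) :
    om w M ^ m = PfS M • ιMulti A (2 * m) w := by
  classical
  rw [om_pow, PfS, Finset.sum_smul]
  symm
  refine Finset.sum_of_injOn (fun σ : Equiv.Perm (Fin (2 * m)) => (σ : Fin (2 * m) → Fin (2 * m)))
    (fun a _ b _ h => DFunLike.coe_injective h) (by simp) ?_ ?_
  · intro g _ hg
    rw [AlternatingMap.map_eq_zero_of_not_injective, smul_zero]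
    intro h
    apply hg
    have hb : Function.Bijective g := Finite.injective_iff_bijective.1 h.of_comp
    exact ⟨Equiv.ofBijective g hb, by simp, rfl⟩
  · intro σ _
    rw [AlternatingMap.map_perm, smul_assoc, smul_comm]
    rfl

theorem ι_mul_comm (x y : V) : ι A x * ι A y = - (ι A y * ι A x) :=
  eq_neg_of_add_eq_zero_left (ι_add_mul_swap x y)

theorem ιι_mem (x y : V) : ι A x * ι A y ∈ Subalgebra.center A (ExteriorAlgebra A V) := by
  rw [Subalgebra.mem_center_iff]
  intro b
  induction b using ExteriorAlgebra.induction with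
  | algebraMap r => exact Algebra.commutes _ _
  | ι z =>
    rw [← mul_assoc, ι_mul_comm z x, neg_mul, mul_assoc, ι_mul_comm z y, mul_neg, neg_neg, mul_assoc]
  | mul a b ha hb => rw [mul_assoc, hb, ← mul_assoc, ha, mul_assoc]
  | add a b ha hb => rw [add_mul, mul_add, ha, hb]

theorem om_mem {κ : Type*} [Fintype κ] (w : κ → V) (M : Matrix κ κ A) :
    om w M ∈ Subalgebra.center A (ExteriorAlgebra A V) :=
  Subalgebra.sum_mem _ fun _ _ => Subalgebra.sum_mem _ fun _ _ =>
    Subalgebra.smul_mem _ (ιι_mem _ _) _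

/-- moving a vector past a product -/
theorem ιMulti_mul_ι {k : ℕ} (w : Fin k → V) (y : V) :
    ιMulti A k w * ι A y = (-1) ^ k * (ι A y * ιMulti A k w) := by
  induction k with
  | zero => simp
  | succ k ih =>
    rw [ιMulti_succ_apply, mul_assoc, ih, pow_succ]
    rcases neg_one_pow_eq_or (ExteriorAlgebra A V) k with h | h <;>
      simp [h, ← mul_assoc, ι_mul_comm (w 0) y]

theorem ef_prod {k : ℕ} (w z : Fin k → V) :
    ιMulti A k w * ιMulti A k z =
      (-1) ^ (k * (k - 1) / 2) * (List.ofFn fun i => ι A (w i) * ι A (z i)).prod := by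
  rw [← Finset.sum_range_id_mul_two, Nat.mul_div_cancel _ two_pos]
  induction k with
  | zero => simp
  | succ k ih =>
    have h : ιMulti A (k+1) w * ιMulti A (k+1) z = (-1) ^ k * ((ι A (w 0) * ι A (z 0)) *
        (ιMulti A k (vecTail w) * ιMulti A k (vecTail z))) := by
      rw [ιMulti_succ_apply, ιMulti_succ_apply, mul_assoc, ← mul_assoc (ιMulti A k (vecTail w)),
        ιMulti_mul_ι]
      rcases neg_one_pow_eq_or (ExteriorAlgebra A V) k with h | h <;>
      simp [h, ← mul_assoc]
    rw [h, ih, Finset.sum_range_succ, pow_add, List.ofFn_succ, List.prod_cons]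
    rcases neg_one_pow_eq_or (ExteriorAlgebra A V) k with h | h <;>
    rcases neg_one_pow_eq_or (ExteriorAlgebra A V) (∑ i ∈ Finset.range k, i) with h' | h' <;>
      simp [h, h', vecTail]

theorem ef_rev_prod {k : ℕ} (w z : Fin k → V) :
    ιMulti A k w * ιMulti A k (fun i => z i.rev) =
      (List.ofFn fun i => ι A (w i) * ι A (z i)).prod := by
  induction k with
  | zero => simp
  | succ k ih =>
    have h1 : ιMulti A (k+1) w = ιMulti A k (fun i => w i.castSucc) * ι A (w (Fin.last k)) := by
      simp only [ιMulti_apply, List.ofFn_succ', List.concat_eq_append, List.prod_append,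
        List.prod_singleton]
    have h2 : ιMulti A (k+1) (fun i => z i.rev) =
        ι A (z (Fin.last k)) * ιMulti A k (fun i => z i.rev.castSucc) := by
      rw [ιMulti_succ_apply]
      simp [vecTail, Function.comp_def, Fin.rev_succ]
    have h3 := Subalgebra.mem_center_iff.1 (ιι_mem (A := A) (w (Fin.last k)) (z (Fin.last k)))
    rw [h1, h2, List.ofFn_succ', List.concat_eq_append, List.prod_append,
        List.prod_singleton, ← ih (fun i => w i.castSucc) (fun i => z i.castSucc), h3, mul_assoc,
        ← mul_assoc (ι A (w _)), ← mul_assoc, h3, mul_assoc]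

theorem pow_expand {C κ : Type*} [CommRing C] [DecidableEq κ] (a : κ → C) (ha : ∀ i, a i * a i = 0)
    (T : Finset κ) : ∀ (W : C) (n : ℕ), (W + ∑ i ∈ T, a i) ^ n =
      ∑ S ∈ T.powerset, (n.descFactorial S.card : C) * (∏ i ∈ S, a i) * W ^ (n - S.card) := by
  induction T using Finset.induction_on with
  | empty => intro W n; simp
  | insert j T hj ih =>
    intro W n
    have sq : ∀ n : ℕ, (W + a j) ^ n = W ^ n + n * a j * W ^ (n - 1) := by
      intro n
      induction n with
      | zero => simp
      | succ n ih =>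
        rw [pow_succ, ih]
        rcases n with _ | n
        · simp
        · push_cast
          try simp only [Nat.add_sub_cancel]
          linear_combination ((n + 1 : C) * W ^ n) * ha j
    rw [Finset.sum_insert hj, ← add_assoc, ih, Finset.sum_powerset_insert hj,
      ← Finset.sum_add_distrib]
    refine Finset.sum_congr rfl fun S hS => ?_
    have hjS : j ∉ S := fun h => hj (Finset.mem_powerset.1 hS h)
    rw [Finset.prod_insert hjS, Finset.card_insert_of_notMem hjS, Nat.descFactorial_succ, sq,
      Nat.sub_sub]
    push_cast
    ring

theorem sum_emb {n q : ℕ} {B : Type*} [AddCommMonoid B] (I : Finset (Fin n)) (h : I.card = q)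
    (g : Fin n → B) : ∑ a : Fin q, g (I.orderIsoOfFin h a) = ∑ a ∈ I, g a := by
  rw [← Finset.sum_coe_sort I g]
  exact Equiv.sum_comp (I.orderIsoOfFin h).toEquiv (fun x : I => g x)

theorem prod_emb {n q : ℕ} {B : Type*} [CommMonoid B] (I : Finset (Fin n)) (h : I.card = q)
    (g : Fin n → B) : ∏ a : Fin q, g (I.orderIsoOfFin h a) = ∏ a ∈ I, g a := by
  rw [← Finset.prod_coe_sort I g]
  exact Equiv.prod_comp (I.orderIsoOfFin h).toEquiv (fun x : I => g x)

/-- restriction of a matrix -/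
def restr {n q : ℕ} (M : Matrix (Fin n) (Fin n) A) (I : Finset (Fin n)) (h : I.card = q) :
    Matrix (Fin q) (Fin q) A :=
  Matrix.of fun a b => M (I.orderIsoOfFin h a) (I.orderIsoOfFin h b)

theorem om_restrict {n q : ℕ} (P : ExteriorAlgebra A V) (w : Fin n → V)
    (M : Matrix (Fin n) (Fin n) A) (I : Finset (Fin n)) (h : I.card = q)
    (hP : ∀ i ∉ I, P * ι A (w i) = 0) :
    P * om w M = P * om (fun a => w (I.orderIsoOfFin h a)) (restr M I h) := by
  have h2 : om (fun a => w (I.orderIsoOfFin h a)) (restr M I h) =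
      ∑ a ∈ I, ∑ b ∈ I, M a b • (ι A (w a) * ι A (w b)) := by
    rw [← sum_emb I h]
    refine Finset.sum_congr rfl fun a _ => ?_
    rw [← sum_emb I h]
    rfl
  rw [h2, om, Finset.mul_sum, Finset.mul_sum]
  symm
  refine Finset.sum_subset_zero_on_sdiff (Finset.subset_univ _) ?_ ?_
  · intro a ha
    have ha' : a ∉ I := by simpa using ha
    rw [Finset.mul_sum]
    refine Finset.sum_eq_zero fun b _ => ?_
    rw [mul_smul_comm, ← mul_assoc, hP a ha', zero_mul, smul_zero]
  · intro a _
    rw [Finset.mul_sum, Finset.mul_sum]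
    refine Finset.sum_subset_zero_on_sdiff (Finset.subset_univ _) ?_ fun _ _ => rfl
    intro b hb
    have hb' : b ∉ I := by simpa using hb
    rw [mul_smul_comm, ι_mul_comm, mul_neg, ← mul_assoc, hP b hb', zero_mul, neg_zero, smul_zero]

theorem mul_pow_congr {C : Type*} [CommRing C] {P W W' : C} (h : P * W = P * W') (q : ℕ) :
    P * W ^ q = P * W' ^ q := by
  induction q with
  | zero => simp
  | succ q ih => rw [pow_succ, pow_succ, ← mul_assoc, ih, mul_right_comm, h]; ring

/-- center -/
abbrev Zc (A V : Type*) [CommRing A] [AddCommGroup V] [Module A V] :=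
  Subalgebra.center A (ExteriorAlgebra A V)

/-- e_i f_i -/
def al {n : ℕ} (E F : Fin n → V) (i : Fin n) : Zc A V :=
  ⟨ι A (E i) * ι A (F i), ιι_mem _ _⟩

/-- two-form in the center -/
def omz {n : ℕ} (w : Fin n → V) (M : Matrix (Fin n) (Fin n) A) : Zc A V := ⟨om w M, om_mem w M⟩

theorem al_sq {n : ℕ} (E F : Fin n → V) (i : Fin n) :
    (al E F i : Zc A V) * al E F i = 0 := by
  apply Subtype.ext
  change (ι A (E i) * ι A (F i)) * (ι A (E i) * ι A (F i)) = 0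
  rw [ι_mul_comm (E i) (F i), neg_mul_neg, mul_assoc, ← mul_assoc (ι A (E i)), ι_mul_comm (E i) (F i),
    neg_mul, mul_assoc, ι_sq_zero]
  simp

theorem alE {n : ℕ} (E F : Fin n → V) (S : Finset (Fin n)) (i : Fin n) (hi : i ∈ S) :
    ((∏ j ∈ S, al E F j : Zc A V) : ExteriorAlgebra A V) * ι A (E i) = 0 := by
  rw [← Finset.prod_erase_mul _ _ hi]
  change _ * (ι A (E i) * ι A (F i)) * _ = 0
  rw [mul_assoc, ι_mul_comm (E i) (F i), neg_mul, mul_assoc, ι_sq_zero]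
  simp

theorem alF {n : ℕ} (E F : Fin n → V) (S : Finset (Fin n)) (i : Fin n) (hi : i ∈ S) :
    ((∏ j ∈ S, al E F j : Zc A V) : ExteriorAlgebra A V) * ι A (F i) = 0 := by
  rw [← Finset.prod_erase_mul _ _ hi]
  change _ * (ι A (E i) * ι A (F i)) * _ = 0
  rw [mul_assoc, mul_assoc, ι_sq_zero]
  simp

theorem red {n : ℕ} (E F : Fin n → V) (X Y : Matrix (Fin n) (Fin n) A) (I : Finset (Fin n))
    {q : ℕ} (h : I.card = q) :
    (∏ j ∈ Iᶜ, al E F j : Zc A V) * (omz E X + omz F Y) ^ q =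
    (∏ j ∈ Iᶜ, al E F j : Zc A V) *
      ∑ r ∈ Finset.range (q + 1), omz (fun a => E (I.orderIsoOfFin h a)) (restr X I h) ^ r *
        omz (fun a => F (I.orderIsoOfFin h a)) (restr Y I h) ^ (q - r) * (q.choose r : Zc A V) := by
  rw [← add_pow]
  apply mul_pow_congr
  rw [mul_add, mul_add]
  congr 1
  · exact Subtype.ext (om_restrict _ E X I h fun i hi => alE E F _ i (by simpa using hi))
  · exact Subtype.ext (om_restrict _ F Y I h fun i hi => alF E F _ i (by simpa using hi))

theorem omz_pow_eq_zero {N m : ℕ} (w : Fin N → V) (M : Matrix (Fin N) (Fin N) A) (h : N < 2 * m) :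
    omz w M ^ m = 0 := Subtype.ext (by
  rw [SubmonoidClass.coe_pow]; exact om_pow_eq_zero w M h)

theorem red_odd {n : ℕ} (E F : Fin n → V) (X Y : Matrix (Fin n) (Fin n) A) (I : Finset (Fin n))
    (h : ¬ Even I.card) :
    (∏ j ∈ Iᶜ, al E F j : Zc A V) * (omz E X + omz F Y) ^ I.card = 0 := by
  rw [red E F X Y I rfl, Finset.sum_eq_zero, mul_zero]
  intro r hr
  have hr' : r < I.card + 1 := Finset.mem_range.1 hr
  rcases lt_or_ge I.card (2 * r) with h1 | h1
  · rw [omz_pow_eq_zero _ _ h1, zero_mul, zero_mul]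
  · have : I.card < 2 * (I.card - r) := by
      have : I.card ≠ 2 * r := fun h' => h (by rw [h']; simp)
      omega
    rw [omz_pow_eq_zero _ _ this]; simp

theorem red_even {n : ℕ} (E F : Fin n → V) (X Y : Matrix (Fin n) (Fin n) A) (I : Finset (Fin n))
    {k : ℕ} (h : I.card = 2 * k) :
    (∏ j ∈ Iᶜ, al E F j : Zc A V) * (omz E X + omz F Y) ^ (2 * k) =
      ((2 * k).choose k * PfS (restr X I h) * ((-1) ^ k * PfS (restr Y I h)) : A) • ∏ j, al E F j := by
  rw [red E F X Y I h, Finset.sum_eq_single k]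
  · have key : omz (fun a => E (I.orderIsoOfFin h a)) (restr X I h) ^ k *
        omz (fun a => F (I.orderIsoOfFin h a)) (restr Y I h) ^ k =
        (PfS (restr X I h) * ((-1) ^ k * PfS (restr Y I h))) • (∏ j ∈ I, (al E F j : Zc A V)) := by
      apply Subtype.ext
      change om (fun a => E (I.orderIsoOfFin h a)) (restr X I h) ^ k *
        om (fun a => F (I.orderIsoOfFin h a)) (restr Y I h) ^ k = (PfS (restr X I h) * ((-1) ^ k * PfS (restr Y I h))) •
          ((∏ j ∈ I, (al E F j : Zc A V) : Zc A V) : ExteriorAlgebra A V)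
      have hs : ((-1) ^ (2 * k * (2 * k - 1) / 2) : ExteriorAlgebra A V) =
          algebraMap A _ ((-1) ^ k) := by
        rw [show 2 * k * (2 * k - 1) / 2 = k * (2 * k - 1) by
          rw [mul_assoc, Nat.mul_div_cancel_left _ two_pos]]
        rcases k with _ | k
        · simp
        · rw [mul_comm, pow_mul, Odd.neg_one_pow ⟨k, by omega⟩]; simp
      rw [om_pow_eq, om_pow_eq, smul_mul_smul_comm, ef_prod, hs, ← Algebra.smul_def, smul_smul]
      congr 1
      · ring
      · rw [← prod_emb I h, ← List.prod_ofFn]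
        change _ = (Subalgebra.center A (ExteriorAlgebra A V)).val _
        rw [map_list_prod, List.map_ofFn]
        rfl
    rw [show 2 * k - k = k by omega, key, ← Finset.prod_compl_mul_prod I]
    rw [mul_assoc ((2 * k).choose k : A)]
    generalize PfS (restr X I h) * ((-1) ^ k * PfS (restr Y I h)) = t
    rw [mul_smul, Nat.cast_smul_eq_nsmul, nsmul_eq_mul, smul_mul_assoc, mul_smul_comm,
      mul_smul_comm]
    congr 1
    ring
  · intro r hr hrk
    have hr' : r < 2 * k + 1 := Finset.mem_range.1 hr
    rcases lt_or_ge (2 * k) (2 * r) with h1 | h1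
    · rw [omz_pow_eq_zero _ _ h1, zero_mul, zero_mul]
    · have : 2 * k < 2 * (2 * k - r) := by omega
      rw [omz_pow_eq_zero _ _ this]; simp
  · intro hk
    exact absurd (Finset.mem_range.2 (by omega)) hk

theorem core {n : ℕ} (E F : Fin n → V) (X Y : Matrix (Fin n) (Fin n) A) (c : A) :
    (omz E X + omz F Y + ∑ i, c • (al E F i : Zc A V)) ^ n =
      (∑ k ∈ Finset.range (n / 2 + 1), ∑ I : {I : Finset (Fin n) // I.card = 2 * k},
        (n.descFactorial (n - 2 * k) * c ^ (n - 2 * k) *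
          ((2 * k).choose k * PfS (restr X I.1 I.2) * ((-1) ^ k * PfS (restr Y I.1 I.2))) : A)) •
            ∏ j, (al E F j : Zc A V) := by
  classical
  rw [pow_expand (fun i => c • (al E F i : Zc A V)) (fun i => by
    rw [smul_mul_smul_comm, al_sq, smul_zero])]
  rw [Finset.powerset_univ, ← Equiv.sum_comp (Equiv.mk Compl.compl Compl.compl (compl_compl (α := Finset (Fin n))) (compl_compl (α := Finset (Fin n))))]
  simp only [Equiv.coe_fn_mk, Finset.sum_smul]
  set T : Finset (Fin n) → Zc A V := fun I => (n.descFactorial (n - I.card) * c ^ (n - I.card) : A) •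
    ((∏ j ∈ Iᶜ, al E F j : Zc A V) * (omz E X + omz F Y) ^ I.card) with hT
  trans ∑ I, T I
  · refine Finset.sum_congr rfl fun I _ => ?_
    have hI : I.card ≤ n := by simpa using Finset.card_le_univ I
    rw [Finset.prod_smul, Finset.prod_const, Finset.card_compl, Fintype.card_fin,
      show n - (n - I.card) = I.card by omega, hT]
    simp only
    rw [mul_smul, Nat.cast_smul_eq_nsmul, nsmul_eq_mul, mul_smul_comm, smul_mul_assoc, mul_smul_comm,
      mul_assoc]
  · have h1 : ∀ k ∈ Finset.range (n / 2 + 1),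
        ∑ I : {I : Finset (Fin n) // I.card = 2 * k},
        (n.descFactorial (n - 2 * k) * c ^ (n - 2 * k) *
          ((2 * k).choose k * PfS (restr X I.1 I.2) * ((-1) ^ k * PfS (restr Y I.1 I.2))) : A) •
            ∏ j, (al E F j : Zc A V) = ∑ I : Finset (Fin n), if I.card = 2 * k then T I else 0 := by
      intro k _
      rw [← Finset.sum_filter, ← Finset.sum_subtype_of_mem (p := fun I => I.card = 2 * k) T (by simp)]
      refine Finset.sum_congr (by ext I; simp [I.2]) fun I _ => ?_
      rw [mul_smul, ← red_even, hT]
      simp only [I.2]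
    rw [Finset.sum_congr rfl h1, Finset.sum_comm]
    refine Finset.sum_congr rfl fun I _ => ?_
    have hI : I.card ≤ n := by simpa using Finset.card_le_univ I
    by_cases he : Even I.card
    · obtain ⟨k, hk⟩ := he
      rw [Finset.sum_eq_single k]
      · rw [if_pos (by omega)]
      · intro b _ hb
        rw [if_neg (by omega)]
      · intro h
        exact absurd (Finset.mem_range.2 (by omega)) h
    · rw [hT]
      simp only
      rw [red_odd _ _ _ _ _ he, smul_zero]
      simp

theorem PfS_restr_neg {n k : ℕ} (Y : Matrix (Fin n) (Fin n) A) (I : Finset (Fin n))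
    (h : I.card = 2 * k) : (-1) ^ k * PfS (restr (-Y) I h) = PfS (restr Y I h) := by
  rw [PfS, PfS, Finset.mul_sum]
  refine Finset.sum_congr rfl fun σ _ => ?_
  rw [mul_smul_comm]
  congr 1
  simp only [restr, Matrix.of_apply, Matrix.neg_apply, Finset.prod_neg, Finset.card_univ,
    Fintype.card_fin]
  rw [← mul_assoc, ← mul_pow]
  simp

theorem Jmat_apply {n : ℕ} (i j : Fin n) : Jmat A n i j = if j = i.rev then 1 else 0 := by
  have := i.isLt
  have := j.isLt
  simp only [Jmat, Matrix.of_apply, Fin.ext_iff, Fin.val_rev]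
  congr 1
  apply propext
  omega

theorem JMJ {n : ℕ} (M : Matrix (Fin n) (Fin n) A) (i j : Fin n) :
    (Jmat A n * M * Jmat A n) i j = M i.rev j.rev := by
  have h : ∀ k : Fin n, (j = k.rev) = (k = j.rev) := fun k => propext
    ⟨fun h => by rw [h, Fin.rev_rev], fun h => by rw [h, Fin.rev_rev]⟩
  simp [Matrix.mul_apply, Jmat_apply, h]

/-- basis -/
def bas (A : Type*) [CommRing A] (n : ℕ) (i : Fin (2 * n)) : Fin (2 * n) → A := Pi.single i 1

/-- first half of the basis -/
def bE (A : Type*) [CommRing A] (n : ℕ) (i : Fin n) : Fin (2 * n) → A := bas A n (sumEquiv n (.inl i))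

/-- second half of the basis, reversed -/
def bF (A : Type*) [CommRing A] (n : ℕ) (i : Fin n) : Fin (2 * n) → A :=
  bas A n (sumEquiv n (.inr i.rev))

theorem om_B {n : ℕ} (X Y : Matrix (Fin n) (Fin n) A) (u : A) :
    om (bas A n) (Matrix.reindex (sumEquiv n) (sumEquiv n)
      (Matrix.fromBlocks X (u • Jmat A n) (-(u • Jmat A n)) (-(Jmat A n * Y * Jmat A n)))) =
    ((omz (bE A n) X + omz (bF A n) (-Y) + ∑ i, (2 * u) • (al (bE A n) (bF A n) i : Zc A _) : Zc A _) :
      ExteriorAlgebra A (Fin (2 * n) → A)) := by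
  have hr : ((omz (bE A n) X + omz (bF A n) (-Y) + ∑ i, (2 * u) • (al (bE A n) (bF A n) i : Zc A _) : Zc A _) :
      ExteriorAlgebra A (Fin (2 * n) → A)) = om (bE A n) X + om (bF A n) (-Y) +
        ∑ i, (2 * u) • (ι A (bE A n i) * ι A (bF A n i)) := by
    have hs := map_sum (Subalgebra.center A (ExteriorAlgebra A (Fin (2 * n) → A))).val
      (fun i => (2 * u) • (al (bE A n) (bF A n) i : Zc A _)) Finset.univ
    exact congrArg (fun t => om (bE A n) X + om (bF A n) (-Y) + t) hs
  rw [hr, om, ← Equiv.sum_comp (sumEquiv n)]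
  simp only [← Equiv.sum_comp (sumEquiv n) (fun b => _ • (_ * ι A (bas A n b)))]
  simp only [Fintype.sum_sum_type, Matrix.reindex_apply, Matrix.submatrix_apply,
    Equiv.symm_apply_apply, Matrix.fromBlocks_apply₁₁, Matrix.fromBlocks_apply₁₂,
    Matrix.fromBlocks_apply₂₁, Matrix.fromBlocks_apply₂₂, Matrix.neg_apply, Matrix.smul_apply,
    Jmat_apply, JMJ, Finset.sum_add_distrib]
  have t1 : ∑ a, ∑ b, (u • if b = Fin.rev a then (1 : A) else 0) •
      (ι A (bas A n (sumEquiv n (.inl a))) * ι A (bas A n (sumEquiv n (.inr b)))) =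
      ∑ i, u • (ι A (bE A n i) * ι A (bF A n i)) := by
    refine Finset.sum_congr rfl fun a _ => ?_
    rw [Finset.sum_eq_single a.rev (fun b _ hb => by simp [hb]) (by simp)]
    simp [bE, bF]
  have t2 : ∑ a, ∑ b, (-(u • if b = Fin.rev a then (1 : A) else 0)) •
      (ι A (bas A n (sumEquiv n (.inr a))) * ι A (bas A n (sumEquiv n (.inl b)))) =
      ∑ i, u • (ι A (bE A n i) * ι A (bF A n i)) := by
    rw [← Equiv.sum_comp Fin.revPerm]
    refine Finset.sum_congr rfl fun a _ => ?_
    rw [Finset.sum_eq_single a (fun b _ hb => by simp [hb]) (by simp)]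
    rw [ι_mul_comm]
    simp [bE, bF]
  have t3 : ∑ a, ∑ b, (-Y (Fin.rev a) (Fin.rev b)) •
      (ι A (bas A n (sumEquiv n (.inr a))) * ι A (bas A n (sumEquiv n (.inr b)))) =
      om (bF A n) (-Y) := by
    rw [om, ← Equiv.sum_comp Fin.revPerm]
    refine Finset.sum_congr rfl fun a _ => ?_
    rw [← Equiv.sum_comp Fin.revPerm]
    simp [bF]
  have t0 : ∑ a, ∑ b, X a b •
      (ι A (bas A n (sumEquiv n (.inl a))) * ι A (bas A n (sumEquiv n (.inl b)))) =
      om (bE A n) X := rfl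
  rw [t0, t1, t2, t3, two_mul u]
  simp only [add_smul, Finset.sum_add_distrib]
  abel

theorem ιMulti_bas (n : ℕ) : ιMulti A (2 * n) (bas A n) =
    ((∏ j, (al (bE A n) (bF A n) j : Zc A _) : Zc A _) : ExteriorAlgebra A (Fin (2 * n) → A)) := by
  rw [← List.prod_ofFn]
  change _ = (Subalgebra.center A (ExteriorAlgebra A _)).val _
  rw [map_list_prod, List.map_ofFn]
  refine Eq.trans ?_ (ef_rev_prod (bE A n) (bF A n))
  rw [ιMulti_mul_ιMulti]
  simp only [ιMulti_apply]
  rw [List.ofFn_congr (two_mul n)]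
  congr 2
  funext i
  refine Fin.addCases (fun i => ?_) (fun i => ?_) i
  · simp [bE, sumEquiv]
  · rw [Fin.append_right]
    simp [bF, sumEquiv]

theorem PfS_B {n : ℕ} (X Y : Matrix (Fin n) (Fin n) A) (u : A) :
    PfS (Matrix.reindex (sumEquiv n) (sumEquiv n)
      (Matrix.fromBlocks X (u • Jmat A n) (-(u • Jmat A n)) (-(Jmat A n * Y * Jmat A n)))) =
    ∑ k ∈ Finset.range (n / 2 + 1), ∑ I : {I : Finset (Fin n) // I.card = 2 * k},
        (n.descFactorial (n - 2 * k) * (2 * u) ^ (n - 2 * k) *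
          ((2 * k).choose k * PfS (restr X I.1 I.2) * PfS (restr Y I.1 I.2)) : A) := by
  classical
  have h1 := congrArg (fun z : Zc A _ => (z : ExteriorAlgebra A (Fin (2 * n) → A)))
    (core (bE A n) (bF A n) X (-Y) (2 * u))
  simp only [PfS_restr_neg] at h1
  rw [SubmonoidClass.coe_pow, ← om_B, om_pow_eq] at h1
  have h2 := h1.trans (congrArg (fun t => _ • t) (ιMulti_bas n).symm)
  have h3 := congrArg (liftAlternating (R := A) (M := Fin (2 * n) → A) (N := A)
    (Function.update 0 (2 * n) Matrix.detRowAlternating)) h2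
  rw [map_smul, map_smul, liftAlternating_apply_ιMulti] at h3
  have h4 : (Function.update (0 : ∀ i, (Fin (2 * n) → A) [⋀^Fin i]→ₗ[A] A) (2 * n)
      Matrix.detRowAlternating) (2 * n) (bas A n) = 1 := by
    rw [Function.update_self]
    change Matrix.det (bas A n) = 1
    have hb : Matrix.of (bas A n) = (1 : Matrix (Fin (2 * n)) (Fin (2 * n)) A) := by
      ext i j
      simp [bas, Matrix.one_apply, Pi.single_apply, eq_comm]
    exact (congrArg Matrix.det hb).trans Matrix.det_one
  rw [h4] at h3
  simpa using h3

theorem Pf_eq [Algebra ℂ A] {m : ℕ} (M : Matrix (Fin (2 * m)) (Fin (2 * m)) A) :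
    Pf M = (((2 : ℂ) ^ m * m.factorial)⁻¹) • PfS M := by
  simp only [Pf, PfS, List.prod_ofFn]

end Aux

/-- `Pf(B(u)) = Σ_{k=0}^{⌊n/2⌋} u^{n−2k} Σ_{|I|=2k} Pf(x_I) Pf(ξ_I)`. -/
theorem Pf_Bmat (n : ℕ) (u : ℂ) :
    Pf (Bmat n u) =
      ∑ k ∈ Finset.range (n / 2 + 1),
        u ^ (n - 2 * k) •
          ∑ I : {I : Finset (Fin n) // I.card = 2 * k},
            Pf (Matrix.of fun a b : Fin (2 * k) =>
                xMat n (I.1.orderIsoOfFin I.2 a) (I.1.orderIsoOfFin I.2 b)) *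
              Pf (Matrix.of fun a b : Fin (2 * k) =>
                xiMat n (I.1.orderIsoOfFin I.2 a) (I.1.orderIsoOfFin I.2 b)) := by
  have hB : Bmat n u = Matrix.reindex (sumEquiv n) (sumEquiv n)
      (Matrix.fromBlocks (xMat n) (algebraMap ℂ (R n) u • Jmat (R n) n)
        (-(algebraMap ℂ (R n) u • Jmat (R n) n)) (-(Jmat (R n) n * xiMat n * Jmat (R n) n))) := by
    simp only [Bmat, algebraMap_smul]
  rw [Pf_eq, hB, PfS_B, Finset.smul_sum]
  refine Finset.sum_congr rfl fun k hk => ?_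
  have hk' : 2 * k ≤ n := by have := Finset.mem_range.1 hk; omega
  rw [Finset.smul_sum, Finset.smul_sum]
  refine Finset.sum_congr rfl fun I _ => ?_
  rw [Pf_eq, Pf_eq, smul_mul_smul_comm, smul_smul]
  change _ = _ • (PfS (restr (xMat n) I.1 I.2) * PfS (restr (xiMat n) I.1 I.2))
  have e : ((n.descFactorial (n - 2 * k) : R n) * (2 * algebraMap ℂ (R n) u) ^ (n - 2 * k) *
      ((2 * k).choose k * PfS (restr (xMat n) I.1 I.2) * PfS (restr (xiMat n) I.1 I.2))) =
      (n.descFactorial (n - 2 * k) * (2 * u) ^ (n - 2 * k) * (2 * k).choose k : ℂ) •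
        (PfS (restr (xMat n) I.1 I.2) * PfS (restr (xiMat n) I.1 I.2)) := by
    rw [Algebra.smul_def]
    simp only [map_mul, map_pow, map_natCast, map_ofNat]
    ring
  rw [e, smul_smul]
  congr 1
  obtain ⟨p, rfl⟩ := Nat.exists_eq_add_of_le hk'
  rw [Nat.add_sub_cancel_left]
  have f1 : ((2 * k).factorial : ℂ) * (2 * k + p).descFactorial p = (2 * k + p).factorial := by
    have := Nat.factorial_mul_descFactorial (n := 2 * k + p) (k := p) (by omega)
    rw [Nat.add_sub_cancel] at this
    exact_mod_cast this
  have f2 : ((2 * k).choose k : ℂ) * k.factorial * k.factorial = (2 * k).factorial := by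
    have := Nat.choose_mul_factorial_mul_factorial (n := 2 * k) (k := k) (by omega)
    rw [show 2 * k - k = k by omega] at this
    exact_mod_cast this
  have n1 : (k.factorial : ℂ) ≠ 0 := by exact_mod_cast k.factorial_ne_zero
  have n2 : ((2 * k + p).factorial : ℂ) ≠ 0 := by exact_mod_cast (2 * k + p).factorial_ne_zero
  have e2 : (2 : ℂ) ^ (2 * k + p) = 2 ^ k * 2 ^ k * 2 ^ p := by rw [pow_add, two_mul, pow_add]
  rw [e2, mul_pow]
  field_simp
  rw [← f1, ← f2]
  ring

end
end

section
/- For every g ∈ GL_n(ℂ) and every 0 ≤ k ≤ ⌊n/2⌋, the operator Γ_k is GL_n-invariant: π(g) ∘ Γ_k ∘ π(g)⁻¹ = Γ_k in End(P). -/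
open Matrix MvPolynomial

noncomputable section

theorem genMat_swap (n : ℕ) (i j : Fin n) : genMat n i j = - genMat n j i := by
  unfold genMat
  simp only [Matrix.of_apply]
  rcases lt_trichotomy i j with h | h | h
  · simp [h, h.not_gt]
  · subst h; simp
  · simp [h, h.not_gt]

theorem genMat_lt (n : ℕ) (v : Idx n) : genMat n v.1.1 v.1.2 = X v := by
  simp [genMat, v.2]

theorem Mop_eq (n : ℕ) (i j : Fin n) : Mop n i j = LinearMap.mulLeft ℂ (genMat n i j) := by
  unfold genMat Mop
  simp only [Matrix.of_apply]
  split_ifs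
  · rfl
  · ext; simp
  · ext; simp

def Dder (n : ℕ) (i j : Fin n) : Derivation ℂ (P n) (P n) :=
  if h : i < j then pderiv ⟨(i, j), h⟩
  else if h' : j < i then - pderiv ⟨(j, i), h'⟩
  else 0

theorem Dop_eq (n : ℕ) (i j : Fin n) :
    Dop n i j = ((Dder n i j : Derivation ℂ (P n) (P n)) : P n →ₗ[ℂ] P n) := by
  unfold Dop Dder
  split_ifs <;> rfl

theorem Dder_gen (n : ℕ) (i j a b : Fin n) :
    Dder n i j (genMat n a b) =
      C ((if i = a then 1 else 0) * (if j = b then 1 else 0) -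
        (if i = b then 1 else 0) * (if j = a then 1 else 0)) := by
  unfold Dder genMat
  simp only [Matrix.of_apply]
  split_ifs <;> simp [pderiv_X, Pi.single_apply] <;> grind

def hM {n : ℕ} (g : GL (Fin n) ℂ) : Matrix (Fin n) (Fin n) ℂ :=
  ((g⁻¹ : GL (Fin n) ℂ) : Matrix (Fin n) (Fin n) ℂ)

def gM {n : ℕ} (g : GL (Fin n) ℂ) : Matrix (Fin n) (Fin n) ℂ :=
  (g : Matrix (Fin n) (Fin n) ℂ)

theorem hM_inv {n : ℕ} (g : GL (Fin n) ℂ) : hM g⁻¹ = gM g := by simp [hM, gM]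

theorem hg {n : ℕ} (g : GL (Fin n) ℂ) : hM g * gM g = 1 := by
  simp [hM, gM]

theorem gh {n : ℕ} (g : GL (Fin n) ℂ) : gM g * hM g = 1 := by
  simp [hM, gM]

theorem entry_eq {n : ℕ} (A : Matrix (Fin n) (Fin n) ℂ) (i j : Fin n) :
    (A.map (algebraMap ℂ (P n)) * genMat n * (A.map (algebraMap ℂ (P n)))ᵀ) i j =
      ∑ p : Fin n × Fin n, (A i p.1 * A j p.2) • genMat n p.1 p.2 := by
  rw [Fintype.sum_prod_type, Finset.sum_comm]
  simp only [Matrix.mul_apply, Finset.sum_mul, Matrix.map_apply, Matrix.transpose_apply]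
  refine Finset.sum_congr rfl fun a _ => Finset.sum_congr rfl fun b _ => ?_
  rw [Algebra.smul_def, map_mul]; ring

theorem piHom_gen {n : ℕ} (g : GL (Fin n) ℂ) (i j : Fin n) :
    piHom n g (genMat n i j) =
      ∑ p : Fin n × Fin n, (hM g i p.1 * hM g j p.2) • genMat n p.1 p.2 := by
  have key : ∀ i j : Fin n, i < j → piHom n g (genMat n i j) =
      ∑ p : Fin n × Fin n, (hM g i p.1 * hM g j p.2) • genMat n p.1 p.2 := by
    intro i j h
    rw [genMat_lt n ⟨(i, j), h⟩, ← entry_eq]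
    simp [piHom, hM]
  have anti : ∀ i j : Fin n,
      ∑ p : Fin n × Fin n, (hM g i p.1 * hM g j p.2) • genMat n p.1 p.2 =
      - ∑ p : Fin n × Fin n, (hM g j p.1 * hM g i p.2) • genMat n p.1 p.2 := by
    intro i j
    rw [← Finset.sum_neg_distrib]
    refine Fintype.sum_equiv (Equiv.prodComm _ _) _ _ fun p => ?_
    rw [genMat_swap]
    simp [mul_comm]
  rcases lt_trichotomy i j with h | h | h
  · exact key i j h
  · subst h
    rw [self_eq_neg.mp (anti i i), self_eq_neg.mp (genMat_swap n i i), map_zero]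
  · rw [genMat_swap, map_neg, key j i h, anti i j]

theorem sum_delta {n : ℕ} {V : Type*} [AddCommGroup V] [Module ℂ V]
    (A B : Matrix (Fin n) (Fin n) ℂ) (hAB : A * B = 1) (F : Fin n → Fin n → V) (i j : Fin n) :
    ∑ p : Fin n × Fin n, (A i p.1 * A j p.2) • ∑ q : Fin n × Fin n,
      (B p.1 q.1 * B p.2 q.2) • F q.1 q.2 = F i j := by
  simp only [Finset.smul_sum, smul_smul]
  rw [Finset.sum_comm]
  have : ∀ q : Fin n × Fin n, ∑ p : Fin n × Fin n,
      (A i p.1 * A j p.2 * (B p.1 q.1 * B p.2 q.2)) • F q.1 q.2 =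
      ((A * B) i q.1 * (A * B) j q.2) • F q.1 q.2 := by
    intro q
    rw [← Finset.sum_smul, Matrix.mul_apply, Matrix.mul_apply, Finset.sum_mul_sum,
      Fintype.sum_prod_type]
    congr 1
    refine Finset.sum_congr rfl fun a _ => Finset.sum_congr rfl fun b _ => ?_
    ring
  simp only [this, hAB]
  rw [Fintype.sum_eq_single (i, j)]
  · simp
  · rintro ⟨a, b⟩ hne
    simp only [Matrix.one_apply]
    split_ifs with h1 h2
    · subst h1; subst h2; exact absurd rfl hne
    all_goals simp

theorem pi_comp {n : ℕ} (g : GL (Fin n) ℂ) :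
    (piHom n g).comp (piHom n g⁻¹) = AlgHom.id ℂ (P n) := by
  apply MvPolynomial.algHom_ext
  intro v
  rw [← genMat_lt, AlgHom.comp_apply, piHom_gen, hM_inv]
  simp only [map_sum, map_smul, piHom_gen]
  exact sum_delta _ _ (gh g) (genMat n) _ _

def piEquiv (n : ℕ) (g : GL (Fin n) ℂ) : P n ≃ₐ[ℂ] P n :=
  AlgEquiv.ofAlgHom (piHom n g) (piHom n g⁻¹) (pi_comp g) (by
    have := pi_comp g⁻¹
    rwa [inv_inv] at this)

def conjG (n : ℕ) (g : GL (Fin n) ℂ) : Module.End ℂ (P n) →ₐ[ℂ] Module.End ℂ (P n) :=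
  AlgHom.ofLinearMap ((piEquiv n g).toLinearEquiv.conj.toLinearMap)
    (by ext; simp) (by intro x y; ext; simp [LinearEquiv.conj_apply])

theorem conjG_apply (n : ℕ) (g : GL (Fin n) ℂ) (T : Module.End ℂ (P n)) :
    conjG n g T = (piHom n g).toLinearMap ∘ₗ T ∘ₗ (piHom n g⁻¹).toLinearMap := rfl

theorem pi_pi {n : ℕ} (g : GL (Fin n) ℂ) (f : P n) : piHom n g (piHom n g⁻¹ f) = f :=
  DFunLike.congr_fun (pi_comp g) f

theorem conjG_M (n : ℕ) (g : GL (Fin n) ℂ) (i j : Fin n) :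
    conjG n g (Mop n i j) =
      ∑ p : Fin n × Fin n, (hM g i p.1 * hM g j p.2) • Mop n p.1 p.2 := by
  refine LinearMap.ext fun f => ?_
  simp only [conjG_apply, Mop_eq, LinearMap.comp_apply, AlgHom.toLinearMap_apply,
    LinearMap.mulLeft_apply, map_mul, pi_pi, piHom_gen, LinearMap.sum_apply, LinearMap.smul_apply,
    Finset.sum_mul, smul_mul_assoc]

theorem der_comm {n : ℕ} (D D' : Derivation ℂ (P n) (P n)) (q : P n →ₐ[ℂ] P n)
    (h : ∀ v, D (q (X v)) = q (D' (X v))) (f : P n) : D (q f) = q (D' f) := by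
  induction f using MvPolynomial.induction_on with
  | C a =>
    have h1 : q (C a) = C a := q.commutes a
    rw [h1, MvPolynomial.derivation_C, MvPolynomial.derivation_C, map_zero]
  | add p r hp hr => simp [hp, hr]
  | mul_X p v hp => simp [Derivation.leibniz, hp, h]

theorem der_sum {n : ℕ} {ι : Type*} (t : Finset ι) (D : ι → Derivation ℂ (P n) (P n)) (x : P n) :
    (∑ p ∈ t, D p) x = ∑ p ∈ t, D p x := by
  classical
  induction t using Finset.induction_on with
  | empty => simp
  | insert a t ha ih => rw [Finset.sum_insert ha, Finset.sum_insert ha, Derivation.add_apply, ih]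

theorem conjG_D (n : ℕ) (g : GL (Fin n) ℂ) (i j : Fin n) :
    conjG n g (Dop n i j) =
      ∑ p : Fin n × Fin n, ((gM g)ᵀ i p.1 * (gM g)ᵀ j p.2) • Dop n p.1 p.2 := by
  refine LinearMap.ext fun f => ?_
  have key := der_comm (Dder n i j)
    (∑ p : Fin n × Fin n, ((gM g)ᵀ i p.1 * (gM g)ᵀ j p.2) • Dder n p.1 p.2) (piHom n g⁻¹) (by
      intro v
      have hC : ∀ a : ℂ, piHom n g⁻¹ (C a) = C a := fun a => (piHom n g⁻¹).commutes a
      rw [← genMat_lt, piHom_gen, hM_inv, der_sum]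
      simp only [map_sum, Derivation.map_smul, map_smul, Derivation.smul_apply, Dder_gen, hC]
      simp only [smul_eq_C_mul, ← C_mul]
      simp only [← map_sum]
      congr 1
      simp [Fintype.sum_prod_type, mul_sub, Finset.sum_sub_distrib]
      ring) f
  have h2 : ∀ (D : Derivation ℂ (P n) (P n)) (x : P n), (D : P n →ₗ[ℂ] P n) x = D x :=
    fun _ _ => rfl
  simp only [conjG_apply, LinearMap.comp_apply, AlgHom.toLinearMap_apply, Dop_eq, h2,
    LinearMap.sum_apply, LinearMap.smul_apply]
  rw [key, pi_pi, der_sum]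
  simp only [Derivation.smul_apply]

def ev {k : ℕ} (i : Fin k) : Fin (2 * k) := ⟨2 * (i : ℕ), by have := i.isLt; omega⟩
def od {k : ℕ} (i : Fin k) : Fin (2 * k) := ⟨2 * (i : ℕ) + 1, by have := i.isLt; omega⟩

def eo (k : ℕ) : Fin k ⊕ Fin k ≃ Fin (2 * k) :=
  Equiv.ofBijective (Sum.elim ev od) (by
    constructor
    · rintro (a | a) (b | b) h <;> simp [ev, od, Fin.ext_iff] at h ⊢ <;> omega
    · intro c
      rcases Nat.even_or_odd' (c : ℕ) with ⟨m, hm | hm⟩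
      · exact ⟨Sum.inl ⟨m, by have := c.isLt; omega⟩, by simp [ev, Fin.ext_iff, hm]⟩
      · exact ⟨Sum.inr ⟨m, by have := c.isLt; omega⟩, by simp [od, Fin.ext_iff, hm]⟩)

theorem prod_eo {k : ℕ} (F : Fin (2 * k) → ℂ) : ∏ a, F a = ∏ i : Fin k, F (ev i) * F (od i) := by
  rw [← (eo k).prod_comp, Fintype.prod_sum_type, ← Finset.prod_mul_distrib]
  rfl

def funEquiv (k n : ℕ) : (Fin (2 * k) → Fin n) ≃ (Fin k → Fin n × Fin n) :=
  ((eo k).arrowCongr (Equiv.refl (Fin n))).symm.trans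
    ((Equiv.sumArrowEquivProdArrow _ _ _).trans
      (Equiv.arrowProdEquivProdArrow _ (fun _ => Fin n) (fun _ => Fin n)).symm)

theorem funEquiv_apply {k n : ℕ} (f : Fin (2 * k) → Fin n) (i : Fin k) :
    funEquiv k n f i = (f (ev i), f (od i)) := rfl

section words
variable {A : Type*} [Ring A] [Algebra ℂ A] {n k : ℕ}

def Wd (T : Fin n → Fin n → A) (f : Fin (2 * k) → Fin n) : A :=
  (List.ofFn (fun i : Fin k => T (f (ev i)) (f (od i)))).prod

def PfW (T : Fin n → Fin n → A) (f : Fin (2 * k) → Fin n) : A :=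
  Pf (Matrix.of fun a b : Fin (2 * k) => T (f a) (f b))

theorem PfW_eq (T : Fin n → Fin n → A) (f : Fin (2 * k) → Fin n) :
    PfW T f = (((2 : ℂ) ^ k * k.factorial)⁻¹) • ∑ σ : Equiv.Perm (Fin (2 * k)),
      (Equiv.Perm.sign σ : ℤ) • Wd T (f ∘ σ) := rfl

theorem Wd_conj (φ : A →ₐ[ℂ] A) (T : Fin n → Fin n → A) (U : Matrix (Fin n) (Fin n) ℂ)
    (h : ∀ i j, φ (T i j) = ∑ p : Fin n × Fin n, (U i p.1 * U j p.2) • T p.1 p.2)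
    (f : Fin (2 * k) → Fin n) :
    φ (Wd T f) = ∑ f' : Fin (2 * k) → Fin n, (∏ a, U (f a) (f' a)) • Wd T f' := by
  unfold Wd
  rw [map_list_prod, List.map_ofFn]
  have h1 : (φ ∘ fun i : Fin k => T (f (ev i)) (f (od i))) = fun i => ∑ p : Fin n × Fin n,
      (U (f (ev i)) p.1 * U (f (od i)) p.2) • T p.1 p.2 := by
    funext i; exact h _ _
  rw [h1, ← MultilinearMap.mkPiAlgebraFin_apply (R := ℂ), MultilinearMap.map_sum]
  symm
  refine Fintype.sum_equiv (funEquiv k n) _ _ fun f' => ?_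
  rw [MultilinearMap.map_smul_univ, MultilinearMap.mkPiAlgebraFin_apply, prod_eo]
  rfl

theorem PfW_conj (φ : A →ₐ[ℂ] A) (T : Fin n → Fin n → A) (U : Matrix (Fin n) (Fin n) ℂ)
    (h : ∀ i j, φ (T i j) = ∑ p : Fin n × Fin n, (U i p.1 * U j p.2) • T p.1 p.2)
    (f : Fin (2 * k) → Fin n) :
    φ (PfW T f) = ∑ f' : Fin (2 * k) → Fin n, (∏ a, U (f a) (f' a)) • PfW T f' := by
  simp only [PfW_eq, map_smul, map_sum, map_zsmul, Wd_conj φ T U h, Finset.smul_sum]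
  conv_rhs => rw [Finset.sum_comm]
  refine Finset.sum_congr rfl fun σ _ => ?_
  symm
  refine Fintype.sum_equiv (σ.symm.arrowCongr (Equiv.refl (Fin n))) _ _ fun f' => ?_
  have h2 : (σ.symm.arrowCongr (Equiv.refl (Fin n))) f' = f' ∘ σ := rfl
  rw [h2]
  have h3 : ∏ a, U ((f ∘ σ) a) ((f' ∘ σ) a) = ∏ a, U (f a) (f' a) :=
    Equiv.prod_comp σ (fun a => U (f a) (f' a))
  rw [h3, smul_comm]
  congr 1
  rw [smul_comm]

theorem PfW_perm (T : Fin n → Fin n → A) (f : Fin (2 * k) → Fin n)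
    (τ : Equiv.Perm (Fin (2 * k))) :
    PfW T (f ∘ τ) = (Equiv.Perm.sign τ : ℤ) • PfW T f := by
  rw [PfW_eq, PfW_eq, smul_comm (Equiv.Perm.sign τ : ℤ)]
  congr 1
  rw [Finset.smul_sum]
  refine Fintype.sum_equiv (Equiv.mulLeft τ) _ _ fun σ => ?_
  have h2 : (f ∘ ⇑((Equiv.mulLeft τ) σ)) = (f ∘ τ) ∘ σ := rfl
  rw [h2, smul_smul]
  congr 1
  simp [← mul_assoc]

theorem PfW_noninj (T : Fin n → Fin n → A) (f : Fin (2 * k) → Fin n)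
    (hf : ¬ Function.Injective f) : PfW T f = 0 := by
  obtain ⟨a, b, hab, hne⟩ : ∃ a b, f a = f b ∧ a ≠ b := by
    simpa [Function.Injective] using hf
  have h1 := PfW_perm T f (Equiv.swap a b)
  have h2 : f ∘ Equiv.swap a b = f := by
    funext c
    simp only [Function.comp_apply, Equiv.swap_apply_def]
    split_ifs <;> simp_all
  rw [h2, Equiv.Perm.sign_swap hne] at h1
  have h3 : (2 : ℂ) • PfW T f = 0 := by
    rw [two_smul]
    nth_rewrite 1 [h1]
    simp
  exact (smul_eq_zero.mp h3).resolve_left two_ne_zero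

theorem sum_inj {m : ℕ} (F : (Fin m → Fin n) → A) (h0 : ∀ f, ¬ Function.Injective f → F f = 0)
    (hp : ∀ f (τ : Equiv.Perm (Fin m)), F (f ∘ τ) = F f) :
    ∑ f, F f = (m.factorial : ℂ) • ∑ I : {I : Finset (Fin n) // I.card = m},
      F (fun a => I.1.orderEmbOfFin I.2 a) := by
  classical
  have h1 : ∑ f, F f = ∑ f : {f : Fin m → Fin n // Function.Injective f}, F f.1 := by
    rw [← Finset.sum_subtype (Finset.univ.filter
      (fun f : Fin m → Fin n => Function.Injective f)) (by simp) F]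
    symm
    refine Finset.sum_subset (Finset.subset_univ _) fun f _ hf => h0 f (by simpa using hf)
  have h2 : ∑ f : {f : Fin m → Fin n // Function.Injective f}, F f.1 =
      ∑ q : {I : Finset (Fin n) // I.card = m} × Equiv.Perm (Fin m),
        F (fun a => q.1.1.orderEmbOfFin q.1.2 a) := by
    symm
    refine Fintype.sum_bijective (fun q => ⟨fun a => q.1.1.orderEmbOfFin q.1.2 (q.2 a),
      (q.1.1.orderEmbOfFin q.1.2).injective.comp q.2.injective⟩) ⟨?_, ?_⟩ _ _ ?_
    · rintro ⟨⟨I, hI⟩, σ⟩ ⟨⟨J, hJ⟩, τ⟩ h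
      have h' : (I.orderEmbOfFin hI) ∘ σ = (J.orderEmbOfFin hJ) ∘ τ := congrArg Subtype.val h
      have hIJ : I = J := by
        have := congrArg Set.range h'
        rw [σ.surjective.range_comp, τ.surjective.range_comp] at this
        simpa using this
      subst hIJ
      have : σ = τ := by
        ext a
        have := (I.orderEmbOfFin hI).injective (congrFun h' a)
        rw [this]
      rw [this]
    · rintro ⟨f, hf⟩
      have hc : (Finset.univ.image f).card = m := by
        rw [Finset.card_image_of_injective _ hf]; simp
      let s : Fin m → Fin m := fun a =>
        ((Finset.univ.image f).orderIsoOfFin hc).symm ⟨f a, by simp⟩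
      have hs : Function.Injective s := by
        intro a b hab
        have := ((Finset.univ.image f).orderIsoOfFin hc).symm.injective hab
        exact hf (congrArg Subtype.val this)
      refine ⟨(⟨_, hc⟩, Equiv.ofBijective s (Finite.injective_iff_bijective.mp hs)), ?_⟩
      apply Subtype.ext
      funext a
      simp [s, ← Finset.coe_orderIsoOfFin_apply]
    · rintro ⟨I, σ⟩
      exact (hp (fun a => I.1.orderEmbOfFin I.2 a) σ).symm
  rw [h1, h2, Fintype.sum_prod_type]
  rw [Finset.smul_sum]
  refine Finset.sum_congr rfl fun I _ => ?_
  change ∑ _y : Equiv.Perm (Fin m), F (fun a => I.1.orderEmbOfFin I.2 a) = _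
  rw [Finset.sum_const, Finset.card_univ, Fintype.card_perm, Fintype.card_fin,
    Nat.cast_smul_eq_nsmul ℂ]

end words

theorem Gamma_eq (n k : ℕ) : (((2 * k).factorial : ℕ) : ℂ) • Gamma n k =
    ∑ f : Fin (2 * k) → Fin n, PfW (Mop n) f * PfW (Dop n) f := by
  rw [sum_inj]
  · rfl
  · intro f hf
    rw [PfW_noninj _ _ hf, zero_mul]
  · intro f τ
    rw [PfW_perm, PfW_perm, smul_mul_smul_comm]
    rcases Int.units_eq_one_or (Equiv.Perm.sign τ) with h | h <;> simp [h]

theorem sum_conj (n k : ℕ) (g : GL (Fin n) ℂ) :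
    conjG n g (∑ f : Fin (2 * k) → Fin n, PfW (Mop n) f * PfW (Dop n) f) =
    ∑ f : Fin (2 * k) → Fin n, PfW (Mop n) f * PfW (Dop n) f := by
  simp only [map_sum, map_mul, PfW_conj _ _ _ (conjG_M n g), PfW_conj _ _ _ (conjG_D n g),
    Finset.sum_mul_sum, smul_mul_smul_comm]
  rw [Finset.sum_comm]
  refine Finset.sum_congr rfl fun f1 _ => ?_
  rw [Finset.sum_comm]
  simp only [← Finset.sum_smul, ← Finset.prod_mul_distrib]
  have h1 : ∀ f2 : Fin (2 * k) → Fin n,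
      ∑ f : Fin (2 * k) → Fin n, ∏ a, (hM g (f a) (f1 a) * (gM g)ᵀ (f a) (f2 a)) =
      ∏ a, (1 : Matrix (Fin n) (Fin n) ℂ) (f2 a) (f1 a) := by
    intro f2
    rw [← Fintype.prod_sum (fun a i => hM g i (f1 a) * (gM g)ᵀ i (f2 a))]
    refine Finset.prod_congr rfl fun a _ => ?_
    rw [← gh g, Matrix.mul_apply]
    refine Finset.sum_congr rfl fun i _ => ?_
    rw [Matrix.transpose_apply, mul_comm]
  simp only [h1]
  rw [Fintype.sum_eq_single f1]
  · simp
  · intro f2 hne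
    obtain ⟨a, ha⟩ := Function.ne_iff.mp hne
    rw [Finset.prod_eq_zero (Finset.mem_univ a), zero_smul]
    exact Matrix.one_apply_ne ha

/-- Each `Γ_k` is `GL_n`-invariant: `π(g) ∘ Γ_k ∘ π(g)⁻¹ = Γ_k`. -/
theorem Gamma_invariant (n : ℕ) (hn : 1 ≤ n) (g : GL (Fin n) ℂ) (k : ℕ) (hk : k ≤ n / 2) :
    (piHom n g).toLinearMap ∘ₗ Gamma n k ∘ₗ (piHom n g⁻¹).toLinearMap = Gamma n k := by
  rw [← conjG_apply]
  have h := sum_conj n k g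
  rw [← Gamma_eq, map_smul] at h
  exact smul_right_injective _ (Nat.cast_ne_zero.mpr (Nat.factorial_ne_zero _)) h

end
end
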